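/- arXiv:1507.03099 — 4 statements merged into one kernel-verified Lean document; each statement's English description precedes it below -/
import Mathlib

section
/- For every integer n ≥ 0, a_3(n) = d_{1,3}(3n+1) − d_{2,3}(3n+1), where d_{r,3}(m) denotes the number of positive divisors of m that are congruent to r modulo 3. -/
/-- The hook length of the cell `(i, j)` in a Young diagram `μ`:
arm length + leg length + 1. -/
def YoungDiagram.hookLength (μ : YoungDiagram) (i j : ℕ) : ℕ :=
  μ.rowLen i + μ.colLen j - i - j - 1

/-- A Young diagram (equivalently, a partition) is a 3-core if none of its
hook numbers is divisible by 3. -/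
def YoungDiagram.IsThreeCore (μ : YoungDiagram) : Prop :=
  ∀ c ∈ μ.cells, ¬ (3 ∣ μ.hookLength c.1 c.2)

/-- `a3 n` is the number of 3-core partitions of `n`. -/
noncomputable def a3 (n : ℕ) : ℕ :=
  Nat.card {μ : YoungDiagram // μ.card = n ∧ μ.IsThreeCore}

/-- `A3 n` is the number of partition pairs of `n` in which each partition is a 3-core. -/
noncomputable def A3 (n : ℕ) : ℕ :=
  Nat.card {p : YoungDiagram × YoungDiagram //
    p.1.card + p.2.card = n ∧ p.1.IsThreeCore ∧ p.2.IsThreeCore}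

/-- `B3 n` is the number of partition triples of `n` in which each partition is a 3-core. -/
noncomputable def B3 (n : ℕ) : ℕ :=
  Nat.card {p : YoungDiagram × YoungDiagram × YoungDiagram //
    p.1.card + p.2.1.card + p.2.2.card = n ∧
    p.1.IsThreeCore ∧ p.2.1.IsThreeCore ∧ p.2.2.IsThreeCore}

/-- `dCount r m` is the number of positive divisors of `m` congruent to `r` modulo 3. -/
def dCount (r m : ℕ) : ℕ := (m.divisors.filter (fun d => d % 3 = r)).card


namespace TC

def SP : List ℕ → Prop
  | [] => True
  | a :: w => 0 < a ∧ (∀ x ∈ w, x ≤ a) ∧ SP w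

theorem SP_iff (w : List ℕ) : SP w ↔ w.SortedGE ∧ ∀ x ∈ w, 0 < x := by
  rw [List.sortedGE_iff_pairwise]
  induction w with
  | nil => simp [SP]
  | cons a w ih =>
    simp only [SP, ih, List.pairwise_cons, List.mem_cons, forall_eq_or_imp, ge_iff_le]
    tauto

def cnt : List ℕ → ℕ → ℕ
  | [], _ => 0
  | a :: w, j => (if j < a then 1 else 0) + cnt w j

theorem cnt_le (w : List ℕ) (j : ℕ) : cnt w j ≤ w.length := by
  induction w with
  | nil => simp [cnt]
  | cons a w ih => simp only [cnt, List.length_cons]; split_ifs <;> omega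

theorem cnt_zero (w : List ℕ) (j : ℕ) (h : ∀ x ∈ w, x ≤ j) : cnt w j = 0 := by
  induction w with
  | nil => simp [cnt]
  | cons a w ih =>
    simp only [List.mem_cons, forall_eq_or_imp] at h
    simp only [cnt, ih h.2]
    rw [if_neg (by omega)]

theorem lt_cnt (w : List ℕ) (hw : SP w) (i j : ℕ) :
    i < cnt w j ↔ ∃ h : i < w.length, j < w[i] := by
  induction w generalizing i with
  | nil => simp [cnt]
  | cons a w ih =>
    obtain ⟨h0, h1, h2⟩ := hw
    simp only [cnt]
    by_cases hj : j < a
    · rw [if_pos hj]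
      cases i with
      | zero => simp [hj]
      | succ i =>
        have := ih h2 i
        simp only [List.length_cons, List.getElem_cons_succ, Nat.add_lt_add_iff_right]
        rw [← this]; omega
    · rw [if_neg hj, cnt_zero w j (fun x hx => by have := h1 x hx; omega)]
      simp only [Nat.add_zero, Nat.not_lt_zero, false_iff, not_exists]
      intro h h'
      have : (a :: w)[i] ∈ a :: w := List.getElem_mem h
      rw [List.mem_cons] at this
      rcases this with h3 | h3
      · omega
      · have := h1 _ h3; omega

def beta : List ℕ → ℕ → Prop
  | [], _ => False
  | a :: w, y => y = a + w.length ∨ beta w y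

theorem beta_iff (w : List ℕ) (hw : SP w) (y : ℕ) :
    ¬ beta w y ↔ ∃ j, j + w.length = y + cnt w j := by
  induction w generalizing y with
  | nil => simp [beta, cnt]
  | cons a w ih =>
    obtain ⟨h0, h1, h2⟩ := hw
    have hz : ∀ j, a ≤ j → cnt w j = 0 := fun j hj =>
      cnt_zero w j (fun x hx => by have := h1 x hx; omega)
    simp only [beta, cnt, List.length_cons, not_or]
    constructor
    · rintro ⟨hy, hb⟩
      by_cases hlt : y < a + w.length
      · obtain ⟨j, hj⟩ := (ih h2 y).1 hb
        have : j < a := by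
          by_contra hc
          have := hz j (by omega)
          omega
        exact ⟨j, by rw [if_pos this]; omega⟩
      · refine ⟨y - w.length - 1, ?_⟩
        rw [if_neg (by omega), hz _ (by omega)]; omega
    · rintro ⟨j, hj⟩
      by_cases hja : j < a
      · rw [if_pos hja] at hj
        exact ⟨by omega, (ih h2 y).2 ⟨j, by omega⟩⟩
      · rw [if_neg hja, hz j (by omega)] at hj
        refine ⟨by omega, (ih h2 y).2 ⟨j + 1, ?_⟩⟩
        rw [hz (j+1) (by omega)]; omega

def core : List ℕ → Prop
  | [] => True
  | a :: w => (∀ j < a, ¬ 3 ∣ a - j + cnt w j) ∧ core w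

theorem core_cons (a : ℕ) (w : List ℕ) (h : SP (a :: w)) :
    core (a :: w) ↔ (∀ y < a + w.length, 3 ∣ a + w.length - y → beta w y) ∧ core w := by
  obtain ⟨h0, h1, h2⟩ := h
  simp only [core]
  refine and_congr_left fun _ => ?_
  constructor
  · intro h y hy h3
    by_contra hb
    obtain ⟨j, hj⟩ := (beta_iff w h2 y).1 hb
    have : j < a := by
      by_contra hc
      have := cnt_zero w j (fun x hx => by have := h1 x hx; omega)
      omega
    apply h j this
    have : a - j + cnt w j = a + w.length - y := by omega
    rwa [this]
  · intro h j hj h3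
    have hc := cnt_le w j
    refine (beta_iff w h2 (j + w.length - cnt w j)).2 ⟨j, by omega⟩ (h _ (by omega) ?_)
    have : a - j + cnt w j = a + w.length - (j + w.length - cnt w j) := by omega
    rwa [← this]

theorem core_iff (w : List ℕ) (hw : SP w) :
    core w ↔ ∀ i j, (h : i < w.length) → j < w[i] → ¬ 3 ∣ w[i] + cnt w j - i - j - 1 := by
  induction w with
  | nil => simp [core]
  | cons a w ih =>
    obtain ⟨h0, h1, h2⟩ := hw
    simp only [core, ih h2]
    constructor
    · rintro ⟨hA, hB⟩ i j h hj
      cases i with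
      | zero =>
        simp only [List.getElem_cons_zero, cnt] at hj ⊢
        have := hA j hj
        rw [if_pos hj]
        have e : a + (1 + cnt w j) - 0 - j - 1 = a - j + cnt w j := by omega
        rwa [e]
      | succ i =>
        simp only [List.getElem_cons_succ, cnt] at hj ⊢
        have hi : i < w.length := by simpa using h
        have := hB i j hi hj
        have h3 := h1 _ (List.getElem_mem hi)
        rw [if_pos (by omega)]
        have e : w[i] + (1 + cnt w j) - (i+1) - j - 1 = w[i] + cnt w j - i - j - 1 := by omega
        rwa [e]
    · intro H
      constructor
      · intro j hj
        have := H 0 j (by simp) (by simpa using hj)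
        simp only [List.getElem_cons_zero, cnt] at this
        rw [if_pos hj] at this
        have e : a + (1 + cnt w j) - 0 - j - 1 = a - j + cnt w j := by omega
        rwa [e] at this
      · intro i j hi hj
        have := H (i+1) j (by simpa using hi) (by simpa using hj)
        simp only [List.getElem_cons_succ, cnt] at this
        have h3 := h1 _ (List.getElem_mem hi)
        rw [if_pos (by omega)] at this
        have e : w[i] + (1 + cnt w j) - (i+1) - j - 1 = w[i] + cnt w j - i - j - 1 := by omega
        rwa [e] at this

def L (p q : ℕ) : List ℕ :=
  if q < p then (2 * p - q - 1) :: L (p - 1) q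
  else if 0 < q then (2 * q - p) :: L p (q - 1) else []
termination_by p + q

theorem L_pos (p q : ℕ) (h : q < p) : L p q = (2 * p - q - 1) :: L (p - 1) q := by
  rw [L, if_pos h]
theorem L_neg (p q : ℕ) (h : ¬ q < p) (h' : 0 < q) : L p q = (2 * q - p) :: L p (q - 1) := by
  rw [L, if_neg h, if_pos h']
theorem L_zero : L 0 0 = [] := by
  rw [L, if_neg (by omega), if_neg (by omega)]

theorem L_ind (P : ℕ → ℕ → Prop) (h0 : P 0 0) (h1 : ∀ p q, q ≤ p → P p q → P (p+1) q)
    (h2 : ∀ p q, p ≤ q + 1 → P p q → P p (q+1)) (p q : ℕ) : P p q := by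
  induction hn : p + q generalizing p q with
  | zero => obtain rfl : p = 0 := by omega
            obtain rfl : q = 0 := by omega
            exact h0
  | succ n ih =>
    by_cases h : q < p
    · obtain ⟨p, rfl⟩ : ∃ p', p = p' + 1 := ⟨p - 1, by omega⟩
      exact h1 p q (by omega) (ih _ _ (by omega))
    · obtain ⟨q, rfl⟩ : ∃ p', q = p' + 1 := ⟨q - 1, by omega⟩
      exact h2 p q (by omega) (ih _ _ (by omega))

theorem L_s1 (p q : ℕ) (h : q ≤ p) : L (p+1) q = (2 * p + 1 - q) :: L p q := by
  rw [L_pos _ _ (by omega)]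
  congr 1
  omega
theorem L_s2 (p q : ℕ) (h : p ≤ q + 1) : L p (q+1) = (2 * q + 2 - p) :: L p q := by
  rw [L_neg _ _ (by omega) (by omega)]
  congr 1

theorem L_len (p q : ℕ) : (L p q).length = p + q := by
  induction p, q using L_ind with
  | h0 => simp [L_zero]
  | h1 p q h ih => rw [L_s1 p q h, List.length_cons, ih]; omega
  | h2 p q h ih => rw [L_s2 p q h, List.length_cons, ih]; omega

theorem L_sum (p q : ℕ) : (L p q).sum + p * q = p ^ 2 + q ^ 2 + q := by
  induction p, q using L_ind with
  | h0 => simp [L_zero]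
  | h1 p q h ih =>
    rw [L_s1 p q h, List.sum_cons]
    zify [show q ≤ 2 * p + 1 by omega] at ih ⊢
    linarith
  | h2 p q h ih =>
    rw [L_s2 p q h, List.sum_cons]
    zify [show p ≤ 2 * q + 2 by omega] at ih ⊢
    linarith

theorem L_bound (p q : ℕ) : ∀ x ∈ L p q, x + 1 + q ≤ 2 * p ∨ x + p ≤ 2 * q := by
  induction p, q using L_ind with
  | h0 => simp [L_zero]
  | h1 p q h ih =>
    rw [L_s1 p q h]
    intro x hx
    rw [List.mem_cons] at hx
    rcases hx with rfl | hx
    · omega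
    · have := ih x hx; omega
  | h2 p q h ih =>
    rw [L_s2 p q h]
    intro x hx
    rw [List.mem_cons] at hx
    rcases hx with rfl | hx
    · omega
    · have := ih x hx; omega

theorem L_SP (p q : ℕ) : SP (L p q) := by
  induction p, q using L_ind with
  | h0 => simp [L_zero, SP]
  | h1 p q h ih =>
    rw [L_s1 p q h]
    exact ⟨by omega, fun x hx => by have := L_bound p q x hx; omega, ih⟩
  | h2 p q h ih =>
    rw [L_s2 p q h]
    exact ⟨by omega, fun x hx => by have := L_bound p q x hx; omega, ih⟩

theorem L_beta (p q y : ℕ) :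
    beta (L p q) y ↔ (y % 3 = 1 ∧ y < 3 * p) ∨ (y % 3 = 2 ∧ y < 3 * q) := by
  induction p, q using L_ind with
  | h0 => simp [L_zero, beta]
  | h1 p q h ih =>
    rw [L_s1 p q h]
    simp only [beta, ih, L_len]
    omega
  | h2 p q h ih =>
    rw [L_s2 p q h]
    simp only [beta, ih, L_len]
    omega

theorem L_core (p q : ℕ) : core (L p q) := by
  induction p, q using L_ind with
  | h0 => simp [L_zero, core]
  | h1 p q h ih =>
    have := L_SP (p+1) q
    rw [L_s1 p q h] at this ⊢
    rw [core_cons _ _ this]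
    refine ⟨fun y hy h3 => ?_, ih⟩
    rw [L_len] at hy h3
    rw [L_beta]
    omega
  | h2 p q h ih =>
    have := L_SP p (q+1)
    rw [L_s2 p q h] at this ⊢
    rw [core_cons _ _ this]
    refine ⟨fun y hy h3 => ?_, ih⟩
    rw [L_len] at hy h3
    rw [L_beta]
    omega

theorem core_exists (w : List ℕ) (hs : SP w) (hc : core w) : ∃ p q, L p q = w := by
  induction w with
  | nil => exact ⟨0, 0, L_zero⟩
  | cons a w ih =>
    rw [core_cons _ _ hs] at hc
    obtain ⟨h0, h1, h2⟩ := hs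
    obtain ⟨p, q, rfl⟩ := ih h2 hc.2
    have hc := hc.1
    have hx : ¬ beta (L p q) (a + (L p q).length) :=
      (beta_iff _ h2 _).2 ⟨a, by rw [cnt_zero _ _ h1]; omega⟩
    simp only [L_beta, L_len] at hc hx
    have hm : (a + (p + q)) % 3 ≠ 0 := by
      intro h
      have := hc 0 (by omega) (by omega)
      omega
    have hm3 : 3 ≤ a + (p + q) → _ := fun h => hc (a + (p+q) - 3) (by omega) (by omega)
    have hp : q < p → 2 * p - q - 1 ≤ a := fun h => h1 _ (by rw [L_pos _ _ h]; simp)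
    have hq : ¬ q < p → 0 < q → 2 * q - p ≤ a := fun h h' => h1 _ (by rw [L_neg _ _ h h']; simp)
    by_cases h1 : (a + (p + q)) % 3 = 1
    · have : a + (p + q) = 3 * p + 1 := by omega
      refine ⟨p + 1, q, ?_⟩
      rw [L_s1 p q (by omega)]
      congr 1; omega
    · have : a + (p + q) = 3 * q + 2 := by omega
      refine ⟨p, q + 1, ?_⟩
      rw [L_s2 p q (by omega)]
      congr 1
      omega

theorem L_inj (p q p' q' : ℕ) (h : L p q = L p' q') : p = p' ∧ q = q' := by
  have H : ∀ y, ((y % 3 = 1 ∧ y < 3 * p') ∨ (y % 3 = 2 ∧ y < 3 * q')) ↔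
      ((y % 3 = 1 ∧ y < 3 * p) ∨ (y % 3 = 2 ∧ y < 3 * q)) := fun y => by
    have := L_beta p q y
    rw [h, L_beta] at this
    exact this
  have a1 : p' ≤ p := by
    by_contra hc
    have := (H (3 * p + 1)).1 (Or.inl (by omega))
    omega
  have a2 : p ≤ p' := by
    by_contra hc
    have := (H (3 * p' + 1)).2 (Or.inl (by omega))
    omega
  have a3 : q' ≤ q := by
    by_contra hc
    have := (H (3 * q + 2)).1 (Or.inr (by omega))
    omega
  have a4 : q ≤ q' := by
    by_contra hc
    have := (H (3 * q' + 2)).2 (Or.inr (by omega))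
    omega
  omega

theorem card_cells (w : List ℕ) : (YoungDiagram.cellsOfRowLens w).card = w.sum := by
  induction w with
  | nil => simp [YoungDiagram.cellsOfRowLens]
  | cons a w ih =>
    rw [YoungDiagram.cellsOfRowLens, Finset.card_union_of_disjoint, Finset.card_map, ih]
    · simp
    · rw [Finset.disjoint_left]
      rintro ⟨i, j⟩ h1 h2
      simp at h1 h2
      omega

theorem card_of (μ : YoungDiagram) : μ.card = μ.rowLens.sum := by
  conv_lhs => rw [← YoungDiagram.ofRowLens_to_rowLens_eq_self (μ := μ)]
  exact card_cells _

theorem SP_rowLens (μ : YoungDiagram) : SP μ.rowLens :=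
  (SP_iff _).2 ⟨μ.rowLens_sorted, μ.pos_of_mem_rowLens⟩

theorem mem_rowLens (μ : YoungDiagram) (i j : ℕ) :
    (i, j) ∈ μ ↔ ∃ h : i < μ.rowLens.length, j < μ.rowLens[i] := by
  conv_lhs => rw [← YoungDiagram.ofRowLens_to_rowLens_eq_self (μ := μ)]
  exact YoungDiagram.mem_ofRowLens

theorem colLen_of (μ : YoungDiagram) (j : ℕ) : μ.colLen j = cnt μ.rowLens j := by
  have h : ∀ i, i < μ.colLen j ↔ i < cnt μ.rowLens j := fun i => by
    rw [← YoungDiagram.mem_iff_lt_colLen, lt_cnt _ (SP_rowLens μ), mem_rowLens]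
  have h1 := h (μ.colLen j)
  have h2 := h (cnt μ.rowLens j)
  omega

theorem core_of (μ : YoungDiagram) : μ.IsThreeCore ↔ core μ.rowLens := by
  rw [core_iff _ (SP_rowLens μ)]
  unfold YoungDiagram.IsThreeCore YoungDiagram.hookLength
  constructor
  · intro H i j hi hj
    have := H (i, j) (by rw [YoungDiagram.mem_cells, mem_rowLens]; exact ⟨hi, hj⟩)
    rw [YoungDiagram.get_rowLens, ← colLen_of]
    exact this
  · rintro H ⟨i, j⟩ hc
    rw [YoungDiagram.mem_cells, mem_rowLens] at hc
    obtain ⟨hi, hj⟩ := hc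
    have := H i j hi hj
    rwa [YoungDiagram.get_rowLens, ← colLen_of] at this

theorem a3_eq (n : ℕ) :
    a3 n = Nat.card {x : ℕ × ℕ // x.1 ^ 2 + x.2 ^ 2 + x.2 = n + x.1 * x.2} := by
  symm
  refine Nat.card_eq_of_bijective (fun x =>
    ⟨YoungDiagram.ofRowLens (L x.1.1 x.1.2) ((SP_iff _).1 (L_SP _ _)).1, ?_, ?_⟩) ⟨?_, ?_⟩
  · have h1 : (YoungDiagram.ofRowLens (L x.1.1 x.1.2) ((SP_iff _).1 (L_SP _ _)).1).card
      = (L x.1.1 x.1.2).sum := card_cells _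
    have h2 := L_sum x.1.1 x.1.2
    have h3 := x.2
    omega
  · rw [core_of, YoungDiagram.rowLens_ofRowLens_eq_self ((SP_iff _).1 (L_SP _ _)).2]
    exact L_core _ _
  · rintro ⟨⟨p, q⟩, h⟩ ⟨⟨p', q'⟩, h'⟩ he
    simp only [Subtype.mk.injEq] at he
    have := congrArg YoungDiagram.rowLens he
    rw [YoungDiagram.rowLens_ofRowLens_eq_self ((SP_iff _).1 (L_SP _ _)).2,
      YoungDiagram.rowLens_ofRowLens_eq_self ((SP_iff _).1 (L_SP _ _)).2] at this
    obtain ⟨rfl, rfl⟩ := L_inj _ _ _ _ this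
    rfl
  · rintro ⟨μ, hn, hc⟩
    obtain ⟨p, q, h⟩ := core_exists _ (SP_rowLens μ) ((core_of μ).1 hc)
    refine ⟨⟨(p, q), ?_⟩, ?_⟩
    · have h2 := L_sum p q
      rw [h, ← card_of, hn] at h2
      simp only
      omega
    · simp only [Subtype.mk.injEq]
      simp only [h]
      exact YoungDiagram.ofRowLens_to_rowLens_eq_self

end TC

namespace TC

def Q (x y : ℤ) : ℤ := x ^ 2 - x * y + y ^ 2

noncomputable def S (m : ℕ) : Finset (ℤ × ℤ) :=
  ((Finset.Icc (-(2 * m : ℤ)) (2 * m)) ×ˢ (Finset.Icc (-(2 * m : ℤ)) (2 * m))).filter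
    (fun z => Q z.1 z.2 = m)

theorem Q_bound (x y : ℤ) (m : ℕ) (h : Q x y = m) : -(2 * m : ℤ) ≤ x ∧ x ≤ 2 * m := by
  unfold Q at h
  have h1 : 3 * x ^ 2 ≤ 4 * m := by nlinarith [sq_nonneg (x - 2 * y)]
  have hm : (0 : ℤ) ≤ m := by positivity
  rcases hm.eq_or_lt with h0 | h0
  · rw [← h0] at h1 ⊢
    have : x = 0 := by nlinarith [sq_nonneg x]
    omega
  · constructor <;> nlinarith

theorem Q_symm (x y : ℤ) : Q x y = Q y x := by unfold Q; ring

theorem mem_S (m : ℕ) (z : ℤ × ℤ) : z ∈ S m ↔ Q z.1 z.2 = m := by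
  unfold S
  simp only [Finset.mem_filter, Finset.mem_product, Finset.mem_Icc, and_iff_right_iff_imp]
  intro h
  exact ⟨Q_bound _ _ _ h, Q_bound _ _ _ (by rw [Q_symm]; exact h)⟩

def chi (d : ℕ) : ℤ := if d % 3 = 1 then 1 else if d % 3 = 2 then -1 else 0

theorem chi_mul (a b : ℕ) : chi (a * b) = chi a * chi b := by
  unfold chi
  rw [Nat.mul_mod]
  have h1 : a % 3 < 3 := Nat.mod_lt _ (by norm_num)
  have h2 : b % 3 < 3 := Nat.mod_lt _ (by norm_num)
  interval_cases a % 3 <;> interval_cases b % 3 <;> simp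

def D (m : ℕ) : ℤ := ∑ d ∈ m.divisors, chi d

theorem D_eq (m : ℕ) : D m = (dCount 1 m : ℤ) - dCount 2 m := by
  unfold D dCount
  rw [Finset.card_filter, Finset.card_filter]
  push_cast
  rw [← Finset.sum_sub_distrib]
  refine Finset.sum_congr rfl fun d _ => ?_
  unfold chi
  split_ifs <;> omega

theorem D_dvd (p m : ℕ) (hp : 0 < p) (hm : 0 < m) :
    ∑ d ∈ (p * m).divisors with p ∣ d, chi d = chi p * D m := by
  unfold D
  rw [Finset.mul_sum]
  symm
  refine Finset.sum_bij (fun d _ => p * d) ?_ ?_ ?_ ?_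
  · intro d hd
    simp only [Nat.mem_divisors, Finset.mem_filter] at hd ⊢
    exact ⟨⟨Nat.mul_dvd_mul_left p hd.1, by positivity⟩, Dvd.intro _ rfl⟩
  · intro a _ b _ h
    exact Nat.eq_of_mul_eq_mul_left hp h
  · intro d hd
    simp only [Nat.mem_divisors, Finset.mem_filter] at hd
    obtain ⟨⟨h1, _⟩, d, rfl⟩ := hd
    exact ⟨d, by simpa using ⟨Nat.dvd_of_mul_dvd_mul_left hp h1, by omega⟩, rfl⟩
  · intro d _
    rw [chi_mul]

theorem D_hecke (p m : ℕ) (hp : p.Prime) (hm : 0 < m) :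
    D (p * m) + (if p ∣ m then chi p * D (m / p) else 0) = (1 + chi p) * D m := by
  have h1 : D (p * m) = chi p * D m + ∑ d ∈ (p * m).divisors with ¬ p ∣ d, chi d := by
    rw [← D_dvd p m hp.pos hm, D, Finset.sum_filter_add_sum_filter_not]
  have h2 : D m = ∑ d ∈ m.divisors with p ∣ d, chi d + ∑ d ∈ m.divisors with ¬ p ∣ d, chi d := by
    rw [Finset.sum_filter_add_sum_filter_not, D]
  have h3 : (p * m).divisors.filter (fun d => ¬ p ∣ d) = m.divisors.filter (fun d => ¬ p ∣ d) := by
    ext d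
    simp only [Nat.mem_divisors, Finset.mem_filter]
    constructor
    · rintro ⟨⟨h, _⟩, h'⟩
      exact ⟨⟨((Nat.Prime.coprime_iff_not_dvd hp).2 h').symm.dvd_of_dvd_mul_left h, by omega⟩, h'⟩
    · rintro ⟨⟨h, _⟩, h'⟩
      exact ⟨⟨h.mul_left p, by have := hp.pos; positivity⟩, h'⟩
  have h4 : ∑ d ∈ m.divisors with p ∣ d, chi d = if p ∣ m then chi p * D (m / p) else 0 := by
    split_ifs with h
    · obtain ⟨k, rfl⟩ := h
      rw [Nat.mul_div_cancel_left _ hp.pos, D_dvd p k hp.pos (Nat.pos_of_mul_pos_left hm)]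
    · apply Finset.sum_eq_zero
      intro d hd
      simp only [Nat.mem_divisors, Finset.mem_filter] at hd
      exact absurd (hd.2.trans hd.1.1) h
  rw [h3] at h1
  linarith

theorem Q_smul (c x y : ℤ) : Q (c * x) (c * y) = c ^ 2 * Q x y := by unfold Q; ring

theorem Q_mul (a b x y : ℤ) : Q (a * x - b * y) (a * y + b * x - b * y) = Q a b * Q x y := by
  unfold Q; ring

theorem exists_root (p : ℕ) (hp : p.Prime) (h : p % 3 = 1) : ∃ z : ZMod p, z ^ 2 + z + 1 = 0 := by
  have := Fact.mk hp
  have : Fact (Nat.Prime 3) := ⟨Nat.prime_three⟩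
  obtain ⟨u, hu⟩ := exists_prime_orderOf_dvd_card (G := (ZMod p)ˣ) 3
    (by rw [ZMod.card_units]; omega)
  have h3 : (u : ZMod p) ^ 3 = 1 := by
    have := pow_orderOf_eq_one u
    rw [hu] at this
    rw [← Units.val_pow_eq_pow_val, this, Units.val_one]
  have h1 : (u : ZMod p) ≠ 1 := by
    intro h
    have : u = 1 := Units.ext h
    rw [this] at hu
    simp at hu
  refine ⟨u, ?_⟩
  have : ((u : ZMod p) - 1) * ((u : ZMod p) ^ 2 + u + 1) = 0 := by
    linear_combination h3
  exact (mul_eq_zero.1 this).resolve_left (sub_ne_zero.2 h1)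

theorem no_root (p : ℕ) (hp : p.Prime) (h : p % 3 = 2) (z : ZMod p) : z ^ 2 + z + 1 ≠ 0 := by
  have := Fact.mk hp
  intro hz
  have h3 : z ^ 3 = 1 := by linear_combination (z - 1) * hz
  have h0 : z ≠ 0 := by rintro rfl; simp at hz
  have hf := ZMod.pow_card_sub_one_eq_one h0
  have h1 : z = 1 := by
    have e : z ^ p = 1 * z := by
      rw [← hf, ← pow_succ]
      congr 1
      have := hp.pos
      omega
    have e2 : z ^ p = z ^ 2 := by
      have e3 : p = 3 * (p / 3) + 2 := by omega
      calc z ^ p = z ^ (3 * (p / 3) + 2) := congrArg (fun k => z ^ k) e3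
        _ = z ^ 2 := by rw [pow_add, pow_mul, h3, one_pow, one_mul]
    have : z * (z - 1) = 0 := by linear_combination e - e2
    rcases mul_eq_zero.1 this with h | h
    · exact absurd h h0
    · linear_combination h
  rw [h1] at hz
  have : ((3 : ℕ) : ZMod p) = 0 := by push_cast; linear_combination hz
  rw [ZMod.natCast_eq_zero_iff] at this
  have := (Nat.prime_dvd_prime_iff_eq hp Nat.prime_three).1 this
  omega

theorem inert_dvd (p : ℕ) (hp : p.Prime) (h : p % 3 = 2) (x y : ℤ) (hd : (p : ℤ) ∣ Q x y) :
    (p : ℤ) ∣ x ∧ (p : ℤ) ∣ y := by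
  have := Fact.mk hp
  rw [← ZMod.intCast_zmod_eq_zero_iff_dvd] at hd
  rw [← ZMod.intCast_zmod_eq_zero_iff_dvd, ← ZMod.intCast_zmod_eq_zero_iff_dvd]
  unfold Q at hd
  push_cast at hd
  have hy : (y : ZMod p) = 0 := by
    by_contra hy
    apply no_root p hp h (-(x : ZMod p) / y)
    field_simp
    linear_combination hd
  rw [hy] at hd
  have : (x : ZMod p) ^ 2 = 0 := by linear_combination hd
  exact ⟨by simpa using this, hy⟩

theorem split_exists (p : ℕ) (hp : p.Prime) (h : p % 3 = 1) : ∃ a b : ℤ, Q a b = p := by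
  have := Fact.mk hp
  obtain ⟨z, hz⟩ := exists_root p hp h
  set k := Nat.sqrt p with hk
  have hk1 : k * k ≤ p := Nat.sqrt_le p
  have hk2 : p < (k + 1) * (k + 1) := Nat.lt_succ_sqrt p
  have hk3 : k * k ≠ p := by
    intro e
    have h1 : k ≠ 1 := by
      intro h1
      rw [h1] at e
      exact hp.one_lt.ne e
    rw [← e] at hp
    exact Nat.not_prime_mul h1 h1 hp
  obtain ⟨u, hu, v, hv, huv, he⟩ := Finset.exists_ne_map_eq_of_card_lt_of_maps_to
    (s := Finset.range (k + 1) ×ˢ Finset.range (k + 1)) (t := (Finset.univ : Finset (ZMod p)))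
    (f := fun w => (w.1 : ZMod p) + z * w.2)
    (by simpa [ZMod.card] using hk2) (by simp)
  simp only [Finset.mem_product, Finset.mem_range] at hu hv
  set a : ℤ := (u.1 : ℤ) - v.1 with ha
  set b : ℤ := (u.2 : ℤ) - v.2 with hb
  have hab : (p : ℤ) ∣ Q a b := by
    rw [← ZMod.intCast_zmod_eq_zero_iff_dvd]
    unfold Q
    rw [ha, hb]
    push_cast
    have e : (u.1 : ZMod p) - v.1 = - z * (u.2 - v.2) := by
      linear_combination he
    rw [e]
    linear_combination ((u.2 : ZMod p) - v.2) ^ 2 * hz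
  have hne : ¬ (a = 0 ∧ b = 0) := by
    rintro ⟨h1, h2⟩
    exact huv (Prod.ext (by omega) (by omega))
  have hA : |a| ≤ k := by rw [abs_le]; omega
  have hB : |b| ≤ k := by rw [abs_le]; omega
  have hA2 : a ^ 2 ≤ (k : ℤ) * k := by
    rw [← sq_abs]; nlinarith [abs_nonneg a]
  have hB2 : b ^ 2 ≤ (k : ℤ) * k := by
    rw [← sq_abs]; nlinarith [abs_nonneg b]
  have hkp : (k : ℤ) * k < p := by exact_mod_cast lt_of_le_of_ne hk1 hk3
  have hlt : Q a b < 3 * p := by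
    unfold Q; nlinarith [sq_nonneg (a + b)]
  have hpos : 0 < Q a b := by
    unfold Q
    by_contra hc
    have h1 : b ^ 2 ≤ 0 := by nlinarith [sq_nonneg (2 * a - b)]
    have h2 : a ^ 2 ≤ 0 := by nlinarith [sq_nonneg (2 * b - a)]
    exact hne ⟨by nlinarith, by nlinarith⟩
  obtain ⟨t, ht⟩ := hab
  have hp0 : (0 : ℤ) < p := by exact_mod_cast hp.pos
  have t1 : 0 < t := by rw [ht] at hpos; exact pos_of_mul_pos_right hpos hp0.le |> fun h => h
  have t2 : t < 3 := by rw [ht] at hlt; nlinarith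
  have : t = 1 ∨ t = 2 := by omega
  rcases this with rfl | rfl
  · exact ⟨a, b, by rw [ht]; ring⟩
  · exfalso
    obtain ⟨⟨a', ha'⟩, ⟨b', hb'⟩⟩ := inert_dvd 2 Nat.prime_two rfl a b ⟨p, by rw [ht]; push_cast; ring⟩
    rw [ha', hb', Q_smul] at ht
    have h2 : (2 : ℤ) ∣ p := ⟨Q a' b', by push_cast at ht; linarith⟩
    have h2' : 2 ∣ p := by exact_mod_cast h2
    have := (Nat.prime_dvd_prime_iff_eq Nat.prime_two hp).1 h2'
    omega

theorem card_scale (p m : ℕ) (hp : 0 < p) :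
    (Finset.image (fun z : ℤ × ℤ => ((p : ℤ) * z.1, (p : ℤ) * z.2)) (S m)).card = (S m).card := by
  apply Finset.card_image_of_injective
  rintro ⟨x, y⟩ ⟨x', y'⟩ h
  have hp0 : (p : ℤ) ≠ 0 := by exact_mod_cast hp.ne'
  simp only [Prod.mk.injEq] at h ⊢
  exact ⟨mul_left_cancel₀ hp0 h.1, mul_left_cancel₀ hp0 h.2⟩

theorem S_scale (p m : ℕ) (hp : 0 < p) (x y : ℤ) (h : Q (p * x) (p * y) = ((p * m : ℕ) : ℤ)) :
    p ∣ m ∧ Q x y = ((m / p : ℕ) : ℤ) := by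
  have hp0 : (p : ℤ) ≠ 0 := by exact_mod_cast hp.ne'
  rw [Q_smul] at h
  push_cast at h
  have h1 : (p : ℤ) * Q x y = m := by
    apply mul_left_cancel₀ hp0
    linarith
  have hd : p ∣ m := by
    have : (p : ℤ) ∣ m := ⟨_, h1.symm⟩
    exact_mod_cast this
  obtain ⟨k, rfl⟩ := hd
  refine ⟨⟨k, rfl⟩, ?_⟩
  rw [Nat.mul_div_cancel_left _ hp]
  push_cast at h1
  exact mul_left_cancel₀ hp0 h1

theorem R_inert (p m : ℕ) (hp : p.Prime) (h : p % 3 = 2) :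
    (S (p * m)).card = if p ∣ m then (S (m / p)).card else 0 := by
  split_ifs with hd
  · rw [← card_scale p (m / p) hp.pos]
    congr 1
    ext ⟨x, y⟩
    simp only [Finset.mem_image, mem_S, Prod.mk.injEq, Prod.exists]
    constructor
    · intro hq
      obtain ⟨⟨x, rfl⟩, ⟨y, rfl⟩⟩ := inert_dvd p hp h x y ⟨m, by rw [hq]; push_cast; rfl⟩
      exact ⟨x, y, (S_scale p m hp.pos x y hq).2, rfl, rfl⟩
    · rintro ⟨x, y, hq, rfl, rfl⟩
      obtain ⟨k, rfl⟩ := hd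
      rw [Nat.mul_div_cancel_left _ hp.pos] at hq
      rw [Q_smul, hq]; push_cast; ring
  · rw [Finset.card_eq_zero, Finset.eq_empty_iff_forall_notMem]
    rintro ⟨x, y⟩ hq
    rw [mem_S] at hq
    simp only at hq
    obtain ⟨⟨x, rfl⟩, ⟨y, rfl⟩⟩ := inert_dvd p hp h x y ⟨m, by rw [hq]; push_cast; rfl⟩
    exact hd (S_scale p m hp.pos x y hq).1

def M (a b : ℤ) (z : ℤ × ℤ) : ℤ × ℤ := (a * z.1 - b * z.2, a * z.2 + b * z.1 - b * z.2)

theorem M_conj (a b : ℤ) (z : ℤ × ℤ) : M (a - b) (-b) (M a b z) = (Q a b * z.1, Q a b * z.2) := by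
  unfold M Q; ext <;> simp only <;> ring

theorem Q_conj (a b : ℤ) : Q (a - b) (-b) = Q a b := by unfold Q; ring

theorem M_conj' (a b : ℤ) (z : ℤ × ℤ) : M a b (M (a - b) (-b) z) = (Q a b * z.1, Q a b * z.2) := by
  unfold M Q; ext <;> simp only <;> ring

theorem Q_M (a b : ℤ) (z : ℤ × ℤ) : Q (M a b z).1 (M a b z).2 = Q a b * Q z.1 z.2 := by
  unfold M; simp only; rw [Q_mul]

theorem M_smul (a b c : ℤ) (z : ℤ × ℤ) :
    M a b (c * z.1, c * z.2) = (c * (M a b z).1, c * (M a b z).2) := by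
  unfold M; ext <;> simp only <;> ring

theorem M_inj (a b : ℤ) (h : Q a b ≠ 0) : Function.Injective (M a b) := by
  intro z z' he
  have := congrArg (M (a - b) (-b)) he
  rw [M_conj, M_conj, Prod.mk.injEq] at this
  exact Prod.ext (mul_left_cancel₀ h this.1) (mul_left_cancel₀ h this.2)

/-- if `p = Q a b` divides the second coordinate of `conj π * z` then `π ∣ z` -/
theorem M_dvd (p : ℕ) (hp : p.Prime) (a b : ℤ) (hab : Q a b = p) (z : ℤ × ℤ)
    (hz : (p : ℤ) ∣ Q z.1 z.2) (hd : (p : ℤ) ∣ (M (a - b) (-b) z).2) : ∃ w, M a b w = z := by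
  have hpI : Prime (p : ℤ) := Nat.prime_iff_prime_int.1 hp
  have h1 := Q_M (a - b) (-b) z
  set U := (M (a - b) (-b) z).1 with hU
  set V := (M (a - b) (-b) z).2 with hV
  have h2 : (p : ℤ) ∣ U ^ 2 := by
    have e : U ^ 2 = Q (a - b) (-b) * Q z.1 z.2 + V * (U - V) := by
      rw [← h1]; unfold Q; ring
    rw [e]
    exact dvd_add (hz.mul_left _) (hd.mul_right _)
  obtain ⟨u, hu⟩ := hpI.dvd_of_dvd_pow h2
  obtain ⟨v, hv⟩ := hd
  refine ⟨(u, v), ?_⟩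
  have h3 := M_conj' a b z
  have h4 : M (a - b) (-b) z = ((p : ℤ) * (u, v).1, (p : ℤ) * (u, v).2) := Prod.ext hu hv
  rw [h4, M_smul, hab, Prod.mk.injEq] at h3
  exact Prod.ext (mul_left_cancel₀ hpI.ne_zero h3.1) (mul_left_cancel₀ hpI.ne_zero h3.2)

theorem M_or (p : ℕ) (hp : p.Prime) (a b : ℤ) (hab : Q a b = p) (z : ℤ × ℤ)
    (hz : (p : ℤ) ∣ Q z.1 z.2) : (∃ w, M a b w = z) ∨ ∃ w, M (a - b) (-b) w = z := by
  have hpI : Prime (p : ℤ) := Nat.prime_iff_prime_int.1 hp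
  have e : (M (a - b) (-b) z).2 * (M a b z).2 = p * z.2 ^ 2 - b ^ 2 * Q z.1 z.2 := by
    rw [← hab]; unfold M Q; simp only; ring
  have hd : (p : ℤ) ∣ (M (a - b) (-b) z).2 * (M a b z).2 := by
    rw [e]
    exact dvd_sub (Dvd.intro _ rfl) (hz.mul_left _)
  rcases hpI.dvd_or_dvd hd with h | h
  · exact Or.inl (M_dvd p hp a b hab z hz h)
  · right
    apply M_dvd p hp (a - b) (-b) (by rw [Q_conj, hab]) z hz
    simpa using h

theorem M_and (p : ℕ) (hp : p.Prime) (h : p % 3 = 1) (a b : ℤ) (hab : Q a b = p) (w w' : ℤ × ℤ)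
    (he : M a b w = M (a - b) (-b) w') :
    (p : ℤ) ∣ (M a b w).1 ∧ (p : ℤ) ∣ (M a b w).2 := by
  have hpI : Prime (p : ℤ) := Nat.prime_iff_prime_int.1 hp
  have h1 := M_conj a b w
  have h2 := M_conj' a b w'
  rw [← he] at h2
  set z := M a b w with hz
  rw [hab] at h1 h2
  have a1 := congrArg Prod.fst h1
  have a2 := congrArg Prod.snd h1
  have b1 := congrArg Prod.fst h2
  have b2 := congrArg Prod.snd h2
  simp only [M] at a1 a2 b1 b2
  have hx : (p : ℤ) ∣ (2 * a - b) * z.1 := ⟨w.1 + w'.1, by linear_combination a1 + b1⟩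
  have hy : (p : ℤ) ∣ (2 * a - b) * z.2 := ⟨w.2 + w'.2, by linear_combination a2 + b2⟩
  have hn : ¬ (p : ℤ) ∣ 2 * a - b := by
    rintro ⟨c, hc⟩
    have hb : (p : ℤ) ∣ 3 * b ^ 2 := ⟨4 - p * c ^ 2, by
      have : 3 * b ^ 2 = 4 * Q a b - (2 * a - b) ^ 2 := by unfold Q; ring
      rw [this, hab, hc]; ring⟩
    have nd : ∀ r : ℕ, r.Prime → r ≠ p → ¬ (p : ℤ) ∣ (r : ℤ) := fun r hr hne hd =>
      hne ((Nat.prime_dvd_prime_iff_eq hp hr).1 (by exact_mod_cast hd)).symm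
    have hb' : (p : ℤ) ∣ b := by
      rcases hpI.dvd_or_dvd hb with h' | h'
      · exact absurd h' (nd 3 Nat.prime_three (by omega))
      · exact hpI.dvd_of_dvd_pow h'
    have ha' : (p : ℤ) ∣ a := by
      have : (p : ℤ) ∣ 2 * a := by
        have := dvd_add ⟨c, hc⟩ hb'
        simpa using this
      rcases hpI.dvd_or_dvd this with h' | h'
      · exact absurd h' (nd 2 Nat.prime_two (by omega))
      · exact h'
    obtain ⟨a', rfl⟩ := ha'
    obtain ⟨b', rfl⟩ := hb'
    rw [Q_smul] at hab
    have : (p : ℤ) * Q a' b' = 1 := mul_left_cancel₀ hpI.ne_zero (by linarith)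
    exact hpI.not_isUnit (IsUnit.of_mul_eq_one _ this)
  exact ⟨(hpI.dvd_or_dvd hx).resolve_left hn, (hpI.dvd_or_dvd hy).resolve_left hn⟩

theorem R_split (p m : ℕ) (hp : p.Prime) (h : p % 3 = 1) :
    (S (p * m)).card + (if p ∣ m then (S (m / p)).card else 0) = 2 * (S m).card := by
  obtain ⟨a, b, hab⟩ := split_exists p hp h
  have hp0 : (p : ℤ) ≠ 0 := by exact_mod_cast hp.ne_zero
  have hQ0 : Q a b ≠ 0 := by rw [hab]; exact hp0
  have hQ0' : Q (a - b) (-b) ≠ 0 := by rw [Q_conj]; exact hQ0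
  have key : ∀ z, z ∈ S (p * m) ↔ (∃ w ∈ S m, M a b w = z) ∨ (∃ w ∈ S m, M (a - b) (-b) w = z) := by
    intro z
    simp only [mem_S]
    constructor
    · intro hz
      rcases M_or p hp a b hab z ⟨m, by rw [hz]; push_cast; rfl⟩ with ⟨w, rfl⟩ | ⟨w, rfl⟩
      · left
        refine ⟨w, ?_, rfl⟩
        rw [Q_M, hab] at hz
        push_cast at hz
        exact mul_left_cancel₀ hp0 hz
      · right
        refine ⟨w, ?_, rfl⟩
        rw [Q_M, Q_conj, hab] at hz
        push_cast at hz
        exact mul_left_cancel₀ hp0 hz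
    · rintro (⟨w, hw, rfl⟩ | ⟨w, hw, rfl⟩)
      · rw [Q_M, hab, hw]; push_cast; rfl
      · rw [Q_M, Q_conj, hab, hw]; push_cast; rfl
  have hU : S (p * m) = (S m).image (M a b) ∪ (S m).image (M (a - b) (-b)) := by
    ext z
    rw [key, Finset.mem_union, Finset.mem_image, Finset.mem_image]
  have hI : ((S m).image (M a b) ∩ (S m).image (M (a - b) (-b))).card
      = if p ∣ m then (S (m / p)).card else 0 := by
    have hmem : ∀ z ∈ ((S m).image (M a b) ∩ (S m).image (M (a - b) (-b))),
        ∃ x y : ℤ, z = (p * x, p * y) ∧ p ∣ m ∧ Q x y = ((m / p : ℕ) : ℤ) := by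
      intro z hz
      rw [Finset.mem_inter, Finset.mem_image, Finset.mem_image] at hz
      obtain ⟨⟨w, hw, rfl⟩, ⟨w', hw', he⟩⟩ := hz
      obtain ⟨⟨x, hx⟩, ⟨y, hy⟩⟩ := M_and p hp h a b hab w w' he.symm
      have hz : M a b w ∈ S (p * m) := (key _).2 (Or.inl ⟨w, hw, rfl⟩)
      rw [mem_S, hx, hy] at hz
      exact ⟨x, y, Prod.ext hx hy, S_scale p m hp.pos x y hz⟩
    split_ifs with hd
    · rw [← card_scale p (m / p) hp.pos]
      congr 1
      ext z
      constructor
      · intro hz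
        obtain ⟨x, y, rfl, _, hq⟩ := hmem z hz
        rw [Finset.mem_image]
        exact ⟨(x, y), (mem_S _ _).2 hq, rfl⟩
      · rw [Finset.mem_image]
        rintro ⟨w, hw, rfl⟩
        rw [mem_S] at hw
        obtain ⟨k, rfl⟩ := hd
        rw [Nat.mul_div_cancel_left _ hp.pos] at hw
        rw [Finset.mem_inter, Finset.mem_image, Finset.mem_image]
        refine ⟨⟨M (a - b) (-b) w, ?_, ?_⟩, ⟨M a b w, ?_, ?_⟩⟩
        · rw [mem_S, Q_M, Q_conj, hab, hw]; push_cast; rfl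
        · rw [M_conj', hab]
        · rw [mem_S, Q_M, hab, hw]; push_cast; rfl
        · rw [M_conj, hab]
    · rw [Finset.card_eq_zero, Finset.eq_empty_iff_forall_notMem]
      intro z hz
      obtain ⟨x, y, _, h, _⟩ := hmem z hz
      exact hd h
  rw [← hI, hU, Finset.card_union_add_card_inter, Finset.card_image_of_injective _ (M_inj a b hQ0),
    Finset.card_image_of_injective _ (M_inj _ _ hQ0')]
  ring

theorem R_eq (m : ℕ) (hm : m % 3 ≠ 0) : ((S m).card : ℤ) = 6 * D m := by
  induction m using Nat.strong_induction_on with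
  | _ m ih =>
  by_cases h1 : m = 1
  · subst h1
    have h1 : (S 1).card = 6 := by decide
    have h2 : D 1 = 1 := by simp [D, chi]
    rw [h1, h2]; norm_num
  · have hp := Nat.minFac_prime h1
    obtain ⟨k, hk⟩ := Nat.minFac_dvd m
    set p := m.minFac with hpdef
    clear_value p
    subst hk
    have hp2 := hp.two_le
    have hp3 : p % 3 ≠ 0 := fun h => hm (by rw [Nat.mul_mod, h]; simp)
    have hk3 : k % 3 ≠ 0 := fun h => hm (by rw [Nat.mul_mod, h]; simp)
    have hk0 : 0 < k := by omega
    have ihk := ih k (by nlinarith) hk3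
    have ihk' : p ∣ k → ((S (k / p)).card : ℤ) = 6 * D (k / p) := by
      rintro ⟨l, rfl⟩
      rw [Nat.mul_div_cancel_left _ hp.pos]
      have hl3 : l % 3 ≠ 0 := fun h => hk3 (by rw [Nat.mul_mod, h]; simp)
      have : 0 < l := by omega
      exact ih l (by nlinarith [Nat.mul_pos hp.pos this]) hl3
    have hD := D_hecke p k hp hk0
    rcases (by omega : p % 3 = 1 ∨ p % 3 = 2) with h | h
    · have hR := R_split p k hp h
      have hc : chi p = 1 := by simp [chi, h]
      rw [hc] at hD
      split_ifs at hD hR with hd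
      · have := ihk' hd
        zify at hR
        linarith
      · zify at hR
        linarith
    · have hR := R_inert p k hp h
      have hc : chi p = -1 := by simp [chi, h]
      rw [hc] at hD
      split_ifs at hD hR with hd
      · have := ihk' hd
        zify at hR
        linarith
      · zify at hR
        linarith

noncomputable def T (m : ℕ) : Finset (ℤ × ℤ) := (S m).filter (fun z => (z.1 + z.2) % 3 = 2)

noncomputable def T1 (m : ℕ) : Finset (ℤ × ℤ) := (T m).filter (fun z => 0 < z.1 + z.2 ∧ 0 < 2 * z.1 - z.2)

theorem mem_T (m : ℕ) (z : ℤ × ℤ) : z ∈ T m ↔ Q z.1 z.2 = m ∧ (z.1 + z.2) % 3 = 2 := by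
  rw [T, Finset.mem_filter, mem_S]

theorem S_T (n : ℕ) : (S (3 * n + 1)).card = 2 * (T (3 * n + 1)).card := by
  have h := Finset.card_filter_add_card_filter_not (s := S (3 * n + 1))
    (fun z : ℤ × ℤ => (z.1 + z.2) % 3 = 2)
  have h2 : ((S (3 * n + 1)).filter (fun z : ℤ × ℤ => ¬ (z.1 + z.2) % 3 = 2)).card
      = (T (3 * n + 1)).card := by
    refine Finset.card_nbij' (fun z => (-z.1, -z.2)) (fun z => (-z.1, -z.2)) ?_ ?_ ?_ ?_
    · rintro ⟨x, y⟩ hz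
      simp only [Finset.coe_filter, Set.mem_ofPred_eq, mem_S] at hz
      simp only [Finset.mem_coe, mem_T]
      obtain ⟨hq, hm⟩ := hz
      refine ⟨by rw [← hq]; unfold Q; ring, ?_⟩
      have h0 : (x + y) % 3 ≠ 0 := by
        intro h0
        obtain ⟨c, hc⟩ := Int.dvd_of_emod_eq_zero h0
        unfold Q at hq
        have : (x + y) ^ 2 - 3 * (x * y) = 3 * n + 1 := by push_cast at hq; linarith
        rw [hc] at this
        have : 3 * (3 * c ^ 2 - x * y - n) = 1 := by linarith
        omega
      omega
    · rintro ⟨x, y⟩ hz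
      simp only [Finset.mem_coe, mem_T] at hz
      simp only [Finset.coe_filter, Set.mem_ofPred_eq, mem_S]
      obtain ⟨hq, hm⟩ := hz
      exact ⟨by rw [← hq]; unfold Q; ring, by omega⟩
    · rintro ⟨x, y⟩ _; simp
    · rintro ⟨x, y⟩ _; simp
  rw [h2] at h
  unfold T at h ⊢
  omega

theorem T_T1 (m : ℕ) : (T m).card = 3 * (T1 m).card := by
  have h2 : ((T m).filter (fun z => 0 < z.1 - 2 * z.2 ∧ 0 < -z.1 - z.2)).card = (T1 m).card := by
    refine Finset.card_nbij' (fun z => (-z.2, z.1 - z.2)) (fun z => (z.2 - z.1, -z.1)) ?_ ?_ ?_ ?_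
    · rintro ⟨x, y⟩ hz
      simp only [T1, Finset.coe_filter, Set.mem_ofPred_eq, mem_T] at hz ⊢
      exact ⟨⟨by rw [← hz.1.1]; unfold Q; ring, by omega⟩, by omega⟩
    · rintro ⟨x, y⟩ hz
      simp only [T1, Finset.coe_filter, Set.mem_ofPred_eq, mem_T] at hz ⊢
      exact ⟨⟨by rw [← hz.1.1]; unfold Q; ring, by omega⟩, by omega⟩
    · rintro ⟨x, y⟩ _; simp
    · rintro ⟨x, y⟩ _; simp
  have h3 : ((T m).filter (fun z => 0 < z.2 - 2 * z.1 ∧ 0 < 2 * z.2 - z.1)).card = (T1 m).card := by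
    refine Finset.card_nbij' (fun z => (z.2 - z.1, -z.1)) (fun z => (-z.2, z.1 - z.2)) ?_ ?_ ?_ ?_
    · rintro ⟨x, y⟩ hz
      simp only [T1, Finset.coe_filter, Set.mem_ofPred_eq, mem_T] at hz ⊢
      exact ⟨⟨by rw [← hz.1.1]; unfold Q; ring, by omega⟩, by omega⟩
    · rintro ⟨x, y⟩ hz
      simp only [T1, Finset.coe_filter, Set.mem_ofPred_eq, mem_T] at hz ⊢
      exact ⟨⟨by rw [← hz.1.1]; unfold Q; ring, by omega⟩, by omega⟩
    · rintro ⟨x, y⟩ _; simp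
    · rintro ⟨x, y⟩ _; simp
  have : (T m).card = (T1 m).card
      + ((T m).filter (fun z => 0 < z.1 - 2 * z.2 ∧ 0 < -z.1 - z.2)).card
      + ((T m).filter (fun z => 0 < z.2 - 2 * z.1 ∧ 0 < 2 * z.2 - z.1)).card := by
    rw [T1, Finset.card_filter, Finset.card_filter, Finset.card_filter, ← Finset.sum_add_distrib,
      ← Finset.sum_add_distrib, Finset.card_eq_sum_ones]
    refine Finset.sum_congr rfl ?_
    rintro ⟨x, y⟩ hz
    rw [mem_T] at hz
    have := hz.2
    simp only at this ⊢
    split_ifs <;> omega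
  rw [this, h2, h3]; ring

theorem C_eq (n : ℕ) : Nat.card {x : ℕ × ℕ // x.1 ^ 2 + x.2 ^ 2 + x.2 = n + x.1 * x.2}
    = (T1 (3 * n + 1)).card := by
  rw [← Fintype.card_coe, ← Nat.card_eq_fintype_card]
  refine Nat.card_eq_of_bijective (fun x =>
    ⟨((x.1.1 : ℤ) + x.1.2 + 1, 2 * (x.1.2 : ℤ) - x.1.1 + 1), ?_⟩) ⟨?_, ?_⟩
  · obtain ⟨⟨p, q⟩, h⟩ := x
    simp only [T1, Finset.mem_filter, mem_T]
    simp only at h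
    zify at h
    refine ⟨⟨?_, by omega⟩, by omega, by omega⟩
    unfold Q
    push_cast
    linear_combination 3 * h
  · rintro ⟨⟨p, q⟩, h⟩ ⟨⟨p', q'⟩, h'⟩ he
    simp only [Subtype.mk.injEq, Prod.mk.injEq] at he ⊢
    omega
  · rintro ⟨⟨x, y⟩, h⟩
    simp only [T1, Finset.mem_filter, mem_T] at h
    obtain ⟨⟨hq, hm⟩, h1, h2⟩ := h
    obtain ⟨q, hq'⟩ : ∃ q : ℕ, x + y = 3 * q + 2 := ⟨((x + y - 2) / 3).toNat, by omega⟩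
    obtain ⟨p, hp'⟩ : ∃ p : ℕ, 2 * x - y = 3 * p + 1 := ⟨((2 * x - y - 1) / 3).toNat, by omega⟩
    obtain rfl : x = p + q + 1 := by omega
    obtain rfl : y = 2 * q - p + 1 := by omega
    refine ⟨⟨(p, q), ?_⟩, rfl⟩
    unfold Q at hq
    push_cast at hq
    simp only
    zify
    linarith

end TC

/-- For every n ≥ 0, a₃(n) = d₁,₃(3n+1) − d₂,₃(3n+1). -/
theorem a3_eq_dCount_sub (n : ℕ) :
    (a3 n : ℤ) = (dCount 1 (3 * n + 1) : ℤ) - (dCount 2 (3 * n + 1) : ℤ) := by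
  have h1 := TC.R_eq (3 * n + 1) (by omega)
  rw [TC.S_T, TC.T_T1, ← TC.C_eq, ← TC.a3_eq, TC.D_eq] at h1
  push_cast at h1
  linarith
end

section
/- For every complex number q with 0 < |q| < 1, the bilateral series identity ∑_{n=−∞}^{∞} q^n/(1 − q^{3n+1}) = (q³;q³)_∞² / ((q;q³)_∞ (q²;q³)_∞) holds, where both sides converge (every denominator 1 − q^{3n+1} is nonzero since |q^{3n+1}| ≠ 1). -/
/-- The infinite q-Pochhammer symbol `(a; q)_∞ = ∏_{n=0}^∞ (1 − a qⁿ)`. -/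
noncomputable def qPochInf (a q : ℂ) : ℂ := ∏' n : ℕ, (1 - a * q ^ n)

namespace BilA3
open Finset Filter Topology

/-- Finite q-Pochhammer symbol. -/
noncomputable def P (a Q : ℂ) (n : ℕ) : ℂ := ∏ k ∈ range n, (1 - a * Q ^ k)

theorem partial_frac (s : Finset ℕ) (v : ℕ → ℂ) (hv : Set.InjOn v s) (w t : ℂ)
    (ht : ∀ i ∈ s, t ≠ v i) :
    ∏ k ∈ s, (t - w * v k) / (t - v k) = 1 + ∑ i ∈ s,
      ((∏ k ∈ s, (v i - w * v k)) * ∏ j ∈ s.erase i, (v i - v j)⁻¹) * (t - v i)⁻¹ := by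
  classical
  have hdeg : (Lagrange.nodal s (fun k => w * v k) - Lagrange.nodal s v).degree < #s := by
    have := Polynomial.degree_sub_lt_left (p := Lagrange.nodal s (fun k => w * v k))
      (q := Lagrange.nodal s v) (by rw [Lagrange.degree_nodal, Lagrange.degree_nodal])
      (Lagrange.nodal_ne_zero)
      (by rw [Lagrange.nodal_monic.leadingCoeff, Lagrange.nodal_monic.leadingCoeff])
    rwa [Lagrange.degree_nodal] at this
  have h := Lagrange.eq_interpolate hv hdeg
  have h2 := congrArg (Polynomial.eval t) h
  rw [Lagrange.eval_interpolate_not_at_node _ ht, Polynomial.eval_sub, Lagrange.eval_nodal,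
    Lagrange.eval_nodal] at h2
  have hne : ∏ i ∈ s, (t - v i) ≠ 0 := prod_ne_zero_iff.mpr fun i hi => sub_ne_zero.mpr (ht i hi)
  rw [prod_div_distrib, div_eq_iff hne, add_mul, one_mul, ← sub_eq_iff_eq_add', h2, mul_comm]
  congr 1
  refine sum_congr rfl fun i hi => ?_
  rw [Polynomial.eval_sub, Lagrange.eval_nodal_at_node hi, Lagrange.eval_nodal, sub_zero,
    Lagrange.nodalWeight]
  ring

theorem prod_erase_split (F : ℕ → ℂ) (i m : ℕ) :
    ∏ j ∈ (range (i + 1 + m)).erase i, F j =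
      (∏ j ∈ range i, F j) * ∏ j ∈ range m, F (i + 1 + j) := by
  have h1 : ∏ j ∈ (range (i + 1 + m)).erase i, F j =
      ∏ j ∈ range (i + 1 + m), (if j = i then 1 else F j) := by
    rw [← mul_prod_erase (range (i + 1 + m)) (fun j => if j = i then 1 else F j)
      (a := i) (by simp; omega)]
    simp only [if_true, one_mul]
    refine prod_congr rfl fun j hj => ?_
    rw [if_neg (ne_of_mem_erase hj)]
  rw [h1, prod_range_add, prod_range_succ]
  simp only [if_true, mul_one]
  congr 1
  · refine prod_congr rfl fun j hj => ?_
    rw [if_neg (by have := mem_range.mp hj; omega)]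
  · refine prod_congr rfl fun j hj => ?_
    rw [if_neg (by omega)]

section
variable {q : ℂ} (h0 : 0 < ‖q‖) (h1 : ‖q‖ < 1)

theorem pow_ne_one' (h1 : ‖q‖ < 1) {n : ℕ} (hn : n ≠ 0) : 1 - q ^ n ≠ 0 := by
  intro h
  have h2 : ‖q ^ n‖ = 1 := by rw [← sub_eq_zero.mp h]; simp
  rw [norm_pow] at h2
  have := pow_lt_one₀ (norm_nonneg q) h1 hn
  linarith

theorem P_ne (h1 : ‖q‖ < 1) {a : ℕ} (ha : a ≠ 0) (n : ℕ) : P (q ^ a) (q ^ 3) n ≠ 0 := by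
  refine prod_ne_zero_iff.mpr fun k _ => ?_
  rw [← pow_mul, ← pow_add]
  exact pow_ne_one' h1 (by omega)

theorem left_prod (hq : q ≠ 0) (h1 : ‖q‖ < 1) (i : ℕ) :
    ∏ k ∈ range i, (((q ^ 3) ^ i - q⁻¹ * (q ^ 3) ^ k) * ((q ^ 3) ^ i - (q ^ 3) ^ k)⁻¹) =
      (q ^ i)⁻¹ * (∏ k ∈ range i, (1 - q * (q ^ 3) ^ (k + 1))) / P (q ^ 3) (q ^ 3) i := by
  rw [← prod_range_reflect, P, mul_div_assoc, ← prod_div_distrib, ← inv_pow]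
  have hc : q⁻¹ ^ i = ∏ _k ∈ range i, q⁻¹ := by simp
  rw [hc, ← prod_mul_distrib]
  refine prod_congr rfl fun k hk => ?_
  have hk := mem_range.mp hk
  obtain ⟨l, rfl⟩ : ∃ l, i = l + k + 1 := ⟨i - 1 - k, by omega⟩
  have : l + k + 1 - 1 - k = l := by omega
  rw [this]
  have e : 1 - q ^ 3 * (q ^ 3) ^ k ≠ 0 := by
    rw [← pow_mul, ← pow_add]; exact pow_ne_one' h1 (by omega)
  have e2 : (q ^ 3) ^ (l + k + 1) - (q ^ 3) ^ l = -((q ^ 3) ^ l * (1 - q ^ 3 * (q ^ 3) ^ k)) := by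
    ring
  have e3 : (q ^ 3) ^ l ≠ 0 := by positivity
  rw [e2]
  field_simp
  ring

theorem right_prod (hq : q ≠ 0) (h1 : ‖q‖ < 1) (i m : ℕ) :
    ∏ k ∈ range m, (((q ^ 3) ^ i - q⁻¹ * (q ^ 3) ^ (i + 1 + k)) *
        ((q ^ 3) ^ i - (q ^ 3) ^ (i + 1 + k))⁻¹) =
      P (q ^ 2) (q ^ 3) m / P (q ^ 3) (q ^ 3) m := by
  rw [P, P, ← prod_div_distrib]
  refine prod_congr rfl fun k hk => ?_
  have e : 1 - q ^ 3 * (q ^ 3) ^ k ≠ 0 := by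
    rw [← pow_mul, ← pow_add]; exact pow_ne_one' h1 (by omega)
  have e2 : (q ^ 3) ^ i - (q ^ 3) ^ (i + 1 + k) = ((q ^ 3) ^ i * (1 - q ^ 3 * (q ^ 3) ^ k)) := by
    ring
  have e3 : (q ^ 3) ^ i ≠ 0 := by positivity
  rw [e2]
  field_simp
  ring

theorem coeff (hq : q ≠ 0) (h1 : ‖q‖ < 1) (i m : ℕ) :
    (∏ k ∈ range (i + 1 + m), ((q ^ 3) ^ i - q⁻¹ * (q ^ 3) ^ k)) *
      ∏ j ∈ (range (i + 1 + m)).erase i, ((q ^ 3) ^ i - (q ^ 3) ^ j)⁻¹ =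
    -(q ^ 3) ^ i * (q ^ (i + 1))⁻¹ * (P q (q ^ 3) (i + 1) * P (q ^ 2) (q ^ 3) m /
      (P (q ^ 3) (q ^ 3) i * P (q ^ 3) (q ^ 3) m)) := by
  rw [prod_erase_split, prod_range_add, prod_range_succ]
  have e : ∀ A B C D E : ℂ, A * B * C * (D * E) = B * (A * D) * (C * E) := by intros; ring
  rw [e, ← prod_mul_distrib, ← prod_mul_distrib, left_prod hq h1, right_prod hq h1]
  have e4 : P q (q ^ 3) (i + 1) = (1 - q) * ∏ k ∈ range i, (1 - q * (q ^ 3) ^ (k + 1)) := by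
    rw [P, prod_range_succ']; simp [mul_comm]
  rw [e4]
  have := P_ne h1 (a := 3) (by norm_num) i
  have := P_ne h1 (a := 3) (by norm_num) m
  field_simp
  ring

theorem lhs_prod (hq : q ≠ 0) (h1 : ‖q‖ < 1) (N : ℕ) :
    ∏ k ∈ range (N + 1 + N), (q * (q ^ 3) ^ N - q⁻¹ * (q ^ 3) ^ k) / (q * (q ^ 3) ^ N - (q ^ 3) ^ k) =
      (q ^ (N + 1))⁻¹ * ((1 - q ^ (3 * N + 2)) / (1 - q ^ (3 * N + 1))) := by
  rw [prod_range_add, ← prod_range_reflect]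
  have e1 : ∏ j ∈ range (N + 1), (q * (q ^ 3) ^ N - q⁻¹ * (q ^ 3) ^ (N + 1 - 1 - j)) /
      (q * (q ^ 3) ^ N - (q ^ 3) ^ (N + 1 - 1 - j)) =
      (q ^ (N + 1))⁻¹ * (P (q ^ 2) (q ^ 3) (N + 1) / P (q ^ 1) (q ^ 3) (N + 1)) := by
    rw [P, P, ← prod_div_distrib, ← inv_pow]
    conv_rhs => rw [← card_range (N + 1), ← prod_const, card_range, ← prod_mul_distrib]
    refine prod_congr rfl fun k hk => ?_
    have hk := mem_range.mp hk
    obtain ⟨l, rfl⟩ : ∃ l, N = l + k := ⟨N - k, by omega⟩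
    have : l + k + 1 - 1 - k = l := by omega
    rw [this, pow_one]
    have e : 1 - q * (q ^ 3) ^ k ≠ 0 := by
      rw [← pow_mul, ← pow_succ']; exact pow_ne_one' h1 (by omega)
    have e2 : q * (q ^ 3) ^ (l + k) - (q ^ 3) ^ l = -((q ^ 3) ^ l * (1 - q * (q ^ 3) ^ k)) := by
      ring
    have e3 : (q ^ 3) ^ l ≠ 0 := by positivity
    rw [e2]
    field_simp
    ring
  have e2 : ∏ j ∈ range N, (q * (q ^ 3) ^ N - q⁻¹ * (q ^ 3) ^ (N + 1 + j)) /
      (q * (q ^ 3) ^ N - (q ^ 3) ^ (N + 1 + j)) =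
      P (q ^ 1) (q ^ 3) N / P (q ^ 2) (q ^ 3) N := by
    rw [P, P, ← prod_div_distrib]
    refine prod_congr rfl fun k hk => ?_
    rw [pow_one]
    have e : 1 - q ^ 2 * (q ^ 3) ^ k ≠ 0 := by
      rw [← pow_mul, ← pow_add]; exact pow_ne_one' h1 (by omega)
    have e2 : q * (q ^ 3) ^ N - (q ^ 3) ^ (N + 1 + k) =
        q * (q ^ 3) ^ N * (1 - q ^ 2 * (q ^ 3) ^ k) := by
      ring
    rw [e2]
    field_simp
    ring
  rw [e1, e2]
  have n1 := P_ne h1 (a := 1) (by norm_num) N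
  have n2 := P_ne h1 (a := 2) (by norm_num) N
  have s : ∀ a, P a (q ^ 3) (N + 1) = P a (q ^ 3) N * (1 - a * (q ^ 3) ^ N) :=
    fun a => prod_range_succ _ _
  rw [s, s]
  have e5 : 1 - q ^ (3 * N + 1) ≠ 0 := pow_ne_one' h1 (by omega)
  have e6 : q ^ 1 * (q ^ 3) ^ N = q ^ (3 * N + 1) := by ring
  have e7 : q ^ 2 * (q ^ 3) ^ N = q ^ (3 * N + 2) := by ring
  rw [e6, e7]
  rw [pow_one] at n1 ⊢
  field_simp

theorem zpow_bound (h0 : 0 < ‖q‖) (h1 : ‖q‖ < 1) (n : ℤ) :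
    1 - q ^ (3 * n + 1) ≠ 0 ∧
    ‖q ^ n / (1 - q ^ (3 * n + 1))‖ ≤ ‖q‖ ^ n.natAbs * (1 - ‖q‖)⁻¹ := by
  have hq : q ≠ 0 := norm_pos_iff.mp h0
  have key : ∀ m : ℕ, m ≠ 0 → 1 - ‖q‖ ≤ ‖1 - q ^ m‖ := by
    intro m hm
    have a1 := norm_sub_norm_le (1 : ℂ) (q ^ m)
    rw [norm_one, norm_pow] at a1
    have := pow_le_of_le_one (norm_nonneg q) h1.le hm
    linarith
  have hp : 0 < 1 - ‖q‖ := by linarith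
  obtain ⟨m, rfl | rfl⟩ := n.eq_nat_or_neg
  · have e : q ^ (3 * (m : ℤ) + 1) = q ^ (3 * m + 1) := by
      rw [← zpow_natCast]; push_cast; rfl
    rw [e]
    refine ⟨pow_ne_one' h1 (by omega), ?_⟩
    rw [norm_div, zpow_natCast, norm_pow, Int.natAbs_natCast, div_eq_mul_inv]
    gcongr
    exact key _ (by omega)
  · rcases Nat.eq_zero_or_pos m with rfl | hm
    · have := key 1 (by norm_num)
      rw [pow_one] at this
      refine ⟨by simpa using pow_ne_one' h1 (n := 1) (by norm_num), ?_⟩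
      simp
      gcongr
    · obtain ⟨l, rfl⟩ : ∃ l, m = l + 1 := ⟨m - 1, by omega⟩
      have e : q ^ (3 * (-((l + 1 : ℕ) : ℤ)) + 1) = (q ^ (3 * l + 2))⁻¹ := by
        rw [← zpow_natCast, ← zpow_neg]; congr 1
      have e' : q ^ (-((l + 1 : ℕ) : ℤ)) = (q ^ (l + 1))⁻¹ := by
        rw [zpow_neg, zpow_natCast]
      have n1 : 1 - q ^ (3 * l + 2) ≠ 0 := pow_ne_one' h1 (by omega)
      have e3 : 1 - (q ^ (3 * l + 2))⁻¹ = -((1 - q ^ (3 * l + 2)) * (q ^ (3 * l + 2))⁻¹) := by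
        field_simp
        ring
      have n2 : 1 - (q ^ (3 * l + 2))⁻¹ ≠ 0 := by
        rw [e3]
        exact neg_ne_zero.mpr (mul_ne_zero n1 (inv_ne_zero (pow_ne_zero _ hq)))
      rw [e, e']
      refine ⟨n2, ?_⟩
      have e4 : (q ^ (l + 1))⁻¹ / (1 - (q ^ (3 * l + 2))⁻¹) =
          -(q ^ (2 * l + 1) / (1 - q ^ (3 * l + 2))) := by
        rw [e3]
        field_simp
        ring
      rw [e4, norm_neg, norm_div, norm_pow, div_eq_mul_inv, Int.natAbs_neg, Int.natAbs_natCast]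
      have := pow_le_pow_of_le_one (norm_nonneg q) h1.le (show l + 1 ≤ 2 * l + 1 by omega)
      have := key (3 * l + 2) (by omega)
      gcongr

theorem summable_bound (h1 : ‖q‖ < 1) (C : ℝ) :
    Summable (fun n : ℤ => C * (‖q‖ ^ n.natAbs * (1 - ‖q‖)⁻¹)) := by
  refine Summable.mul_left _ (Summable.mul_right _ ?_)
  have := summable_geometric_of_lt_one (norm_nonneg q) h1
  apply Summable.of_nat_of_neg <;> simpa using this

theorem P_tendsto (h1 : ‖q‖ < 1) {a : ℕ} (ha : a ≠ 0) :
    Tendsto (P (q ^ a) (q ^ 3)) atTop (𝓝 (qPochInf (q ^ a) (q ^ 3))) ∧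
      qPochInf (q ^ a) (q ^ 3) ≠ 0 := by
  have hs : Summable (fun n : ℕ => ‖-(q ^ a * (q ^ 3) ^ n)‖) := by
    simp only [norm_neg, norm_mul, norm_pow]
    refine Summable.mul_left _ (summable_geometric_of_lt_one (by positivity) ?_)
    exact pow_lt_one₀ (norm_nonneg q) h1 (by norm_num)
  have hm := multipliable_one_add_of_summable hs
  have hn := tprod_one_add_ne_zero_of_summable (f := fun n : ℕ => -(q ^ a * (q ^ 3) ^ n)) (by
    intro i
    rw [← sub_eq_add_neg, ← pow_mul, ← pow_add]
    exact pow_ne_one' h1 (by omega)) hs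
  have ht := hm.hasProd.tendsto_prod_nat
  simp only [← sub_eq_add_neg] at ht hn
  exact ⟨ht, hn⟩

/-- coefficient. -/
noncomputable def c (q : ℂ) (N : ℕ) (n : ℤ) : ℂ :=
  P q (q ^ 3) ((N - n).toNat + 1) * P (q ^ 2) (q ^ 3) (N + n).toNat /
      (P (q ^ 3) (q ^ 3) (N - n).toNat * P (q ^ 3) (q ^ 3) (N + n).toNat)

/-- truncated term. -/
noncomputable def T (q : ℂ) (N : ℕ) (n : ℤ) : ℂ :=
  if n ∈ Icc (-(N : ℤ)) N then c q N n * (q ^ n / (1 - q ^ (3 * n + 1))) else 0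

theorem finite_id (h0 : 0 < ‖q‖) (h1 : ‖q‖ < 1) (N : ℕ) :
    (1 - q ^ (3 * N + 2)) / (1 - q ^ (3 * N + 1)) = q ^ (N + 1) + ∑' n : ℤ, T q N n := by
  have hq : q ≠ 0 := norm_pos_iff.mp h0
  have hinj : Function.Injective (fun k : ℕ => (q ^ 3) ^ k) := by
    intro a b hab
    have : ‖q‖ ^ (3 * a) = ‖q‖ ^ (3 * b) := by
      have := congrArg norm hab
      simpa [← pow_mul] using this
    have := (pow_right_strictAnti₀ h0 h1).injective this
    omega
  have ht : ∀ i : ℕ, q * (q ^ 3) ^ N ≠ (q ^ 3) ^ i := by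
    intro i hab
    have : ‖q‖ ^ (3 * N + 1) = ‖q‖ ^ (3 * i) := by
      have := congrArg norm hab
      rw [← pow_mul, ← pow_succ', ← pow_mul, norm_pow, norm_pow] at this
      exact this
    have := (pow_right_strictAnti₀ h0 h1).injective this
    omega
  have h := partial_frac (range (N + 1 + N)) (fun k => (q ^ 3) ^ k) hinj.injOn q⁻¹
    (q * (q ^ 3) ^ N) (fun i _ => ht i)
  rw [lhs_prod hq h1] at h
  have h2 := congrArg (fun x => q ^ (N + 1) * x) h
  rw [mul_inv_cancel_left₀ (pow_ne_zero _ hq), mul_add, mul_one] at h2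
  rw [h2, mul_sum]
  congr 1
  rw [tsum_eq_sum (f := T q N) (s := Icc (-(N : ℤ)) N) (fun b hb => if_neg hb)]
  refine sum_bij' (fun i _ => (N : ℤ) - i) (fun n _ => ((N : ℤ) - n).toNat) ?_ ?_ ?_ ?_ ?_
  · intro i hi; simp at hi ⊢; omega
  · intro i hi; simp at hi ⊢; omega
  · intro i hi; simp
  · intro i hi; simp at hi ⊢; omega
  · intro i hi
    have hi' := mem_range.mp hi
    obtain ⟨m, hm⟩ : ∃ m, N + 1 + N = i + 1 + m := ⟨2 * N - i, by omega⟩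
    rw [T, if_pos (by simp; omega), c, hm, coeff hq h1]
    have a1 : ((N : ℤ) - (N - i)).toNat = i := by omega
    have a2 : ((N : ℤ) + (N - i)).toNat = m := by omega
    rw [a1, a2]
    have b1 := (zpow_bound h0 h1 ((N : ℤ) - i)).1
    have b2 : q ^ (3 * ((N : ℤ) - i) + 1) = q * (q ^ 3) ^ N / (q ^ 3) ^ i := by
      rw [zpow_add₀ hq, zpow_mul, zpow_sub₀ (zpow_ne_zero _ hq)]
      norm_cast
      ring
    have b3 : q ^ ((N : ℤ) - i) = q ^ N / q ^ i := by
      rw [zpow_sub₀ hq]; norm_cast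
    rw [b2] at b1 ⊢
    rw [b3]
    have b4 := sub_ne_zero.mpr (ht i)
    have b5 : (q ^ 3) ^ i - q * (q ^ 3) ^ N ≠ 0 := sub_ne_zero.mpr (ht i).symm
    have b6 : 1 - q * (q ^ 3) ^ N / (q ^ 3) ^ i =
      -(q * (q ^ 3) ^ N - (q ^ 3) ^ i) * ((q ^ 3) ^ i)⁻¹ := by field_simp; ring
    rw [b6]
    generalize P q (q ^ 3) (i + 1) * P (q ^ 2) (q ^ 3) m /
      (P (q ^ 3) (q ^ 3) i * P (q ^ 3) (q ^ 3) m) = Z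
    generalize hY : q * (q ^ 3) ^ N - (q ^ 3) ^ i = Y at *
    field_simp
    try ring

theorem bdd_of_tendsto {u : ℕ → ℂ} {x : ℂ} (h : Tendsto u atTop (𝓝 x)) :
    ∃ C : ℝ, 0 ≤ C ∧ ∀ n, ‖u n‖ ≤ C := by
  obtain ⟨C, hC⟩ := (Metric.isBounded_range_of_tendsto u h).exists_norm_le
  refine ⟨C, (norm_nonneg _).trans (hC (u 0) ⟨0, rfl⟩), fun n => hC _ ⟨n, rfl⟩⟩

theorem limit_id (h0 : 0 < ‖q‖) (h1 : ‖q‖ < 1) :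
    Tendsto (fun N => ∑' n : ℤ, T q N n) atTop (𝓝 (∑' n : ℤ,
      qPochInf q (q ^ 3) * qPochInf (q ^ 2) (q ^ 3) /
        (qPochInf (q ^ 3) (q ^ 3) * qPochInf (q ^ 3) (q ^ 3)) *
      (q ^ n / (1 - q ^ (3 * n + 1))))) := by
  obtain ⟨t1, -⟩ := P_tendsto h1 (a := 1) (by norm_num)
  obtain ⟨t2, -⟩ := P_tendsto h1 (a := 2) (by norm_num)
  obtain ⟨t3, n3⟩ := P_tendsto h1 (a := 3) (by norm_num)
  rw [pow_one] at t1
  obtain ⟨C1, p1, b1⟩ := bdd_of_tendsto t1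
  obtain ⟨C2, p2, b2⟩ := bdd_of_tendsto t2
  obtain ⟨C3, p3, b3⟩ := bdd_of_tendsto (t3.inv₀ n3)
  refine tendsto_tsum_of_dominated_convergence (summable_bound h1 (C1 * C2 * (C3 * C3))) ?_ ?_
  · intro n
    have l1 : Tendsto (fun N : ℕ => ((N : ℤ) - n).toNat) atTop atTop := by
      refine tendsto_atTop.mpr fun b => ?_
      filter_upwards [eventually_ge_atTop (b + n.natAbs)] with N hN
      omega
    have l2 : Tendsto (fun N : ℕ => ((N : ℤ) + n).toNat) atTop atTop := by
      refine tendsto_atTop.mpr fun b => ?_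
      filter_upwards [eventually_ge_atTop (b + n.natAbs)] with N hN
      omega
    have l3 : Tendsto (fun N : ℕ => ((N : ℤ) - n).toNat + 1) atTop atTop :=
      (tendsto_add_atTop_nat 1).comp l1
    have hc : Tendsto (fun N => c q N n) atTop (𝓝 (qPochInf q (q ^ 3) * qPochInf (q ^ 2) (q ^ 3) /
        (qPochInf (q ^ 3) (q ^ 3) * qPochInf (q ^ 3) (q ^ 3)))) :=
      ((t1.comp l3).mul (t2.comp l2)).div ((t3.comp l1).mul (t3.comp l2)) (mul_ne_zero n3 n3)
    refine (hc.mul_const _).congr' ?_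
    filter_upwards [eventually_ge_atTop n.natAbs] with N hN
    rw [T, if_pos (by simp; omega)]
  · refine Eventually.of_forall fun N n => ?_
    have hz := (zpow_bound h0 h1 n).2
    have hp : 0 < 1 - ‖q‖ := by linarith
    rw [T]
    split_ifs
    · rw [norm_mul]
      refine mul_le_mul ?_ hz (norm_nonneg _) (by positivity)
      rw [c, div_eq_mul_inv, mul_inv, norm_mul, norm_mul, norm_mul]
      have := b1 (((N : ℤ) - n).toNat + 1)
      have := b2 ((N : ℤ) + n).toNat
      have := b3 ((N : ℤ) - n).toNat
      have := b3 ((N : ℤ) + n).toNat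
      gcongr
    · rw [norm_zero]; positivity

end
end BilA3

/-- For 0 < |q| < 1, the bilateral series ∑_{n∈ℤ} qⁿ/(1 − q^{3n+1}) converges and equals
(q³;q³)²_∞ / ((q;q³)_∞ (q²;q³)_∞). -/
theorem bilateral_sum_a3 (q : ℂ) (h0 : 0 < ‖q‖) (h1 : ‖q‖ < 1) :
    Summable (fun n : ℤ => q ^ n / (1 - q ^ (3 * n + 1))) ∧
    ∑' n : ℤ, q ^ n / (1 - q ^ (3 * n + 1)) =
      qPochInf (q ^ 3) (q ^ 3) ^ 2 /
        (qPochInf q (q ^ 3) * qPochInf (q ^ 2) (q ^ 3)) := by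
  have hs : Summable (fun n : ℤ => q ^ n / (1 - q ^ (3 * n + 1))) := by
    refine Summable.of_norm_bounded (BilA3.summable_bound h1 1) fun n => ?_
    rw [one_mul]
    exact (BilA3.zpow_bound h0 h1 n).2
  refine ⟨hs, ?_⟩
  have hl := BilA3.limit_id h0 h1
  rw [tsum_mul_left] at hl
  have hp : Filter.Tendsto (fun n : ℕ => q ^ n) Filter.atTop (nhds 0) :=
    tendsto_pow_atTop_nhds_zero_of_norm_lt_one h1
  have hk : ∀ a : ℕ, Filter.Tendsto (fun N : ℕ => 3 * N + a) Filter.atTop Filter.atTop := by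
    intro a
    refine Filter.tendsto_atTop_mono (fun n => ?_) Filter.tendsto_id
    simp only [id]
    omega
  have hr : Filter.Tendsto (fun N : ℕ => (1 - q ^ (3 * N + 2)) / (1 - q ^ (3 * N + 1)) - q ^ (N + 1))
      Filter.atTop (nhds ((1 - 0) / (1 - 0) - 0)) :=
    (((hp.comp (hk 2)).const_sub 1).div ((hp.comp (hk 1)).const_sub 1) (by norm_num)).sub
      (hp.comp (Filter.tendsto_add_atTop_nat 1))
  have he : (fun N : ℕ => (1 - q ^ (3 * N + 2)) / (1 - q ^ (3 * N + 1)) - q ^ (N + 1)) =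
      fun N => ∑' n : ℤ, BilA3.T q N n := by
    funext N
    rw [BilA3.finite_id h0 h1 N]
    ring
  rw [he] at hr
  have hu := tendsto_nhds_unique hl hr
  have n1 := (BilA3.P_tendsto h1 (a := 1) (by norm_num)).2
  have n2 := (BilA3.P_tendsto h1 (a := 2) (by norm_num)).2
  have n3 := (BilA3.P_tendsto h1 (a := 3) (by norm_num)).2
  rw [pow_one] at n1
  rw [eq_div_iff (mul_ne_zero n1 n2)]
  field_simp at hu
  simp only [sub_zero, div_one, mul_one] at hu
  linear_combination hu
end

section
/- For every complex number q with 0 < |q| < 1, the bilateral series identity ∑_{n=−∞}^{∞} n·q^{2n}/(1 − q^{3n+1}) = (q³;q³)_∞⁴ / ((q;q³)_∞² (q²;q³)_∞²) holds, where both sides converge (every denominator 1 − q^{3n+1} is nonzero since |q^{3n+1}| ≠ 1). -/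
open Filter Topology Polynomial

noncomputable def Qf (p x : ℂ) (n : ℕ) : ℂ := ∏ i ∈ Finset.range n, (1 - x * p ^ i)

lemma pf1 (L : ℕ) (v y : ℕ → ℂ) (hv : Set.InjOn v (Finset.range L : Finset ℕ)) (b : ℂ)
    (hb : ∀ i ∈ Finset.range L, b ≠ v i) :
    ∏ j ∈ Finset.range L, (b - y j) = (∏ j ∈ Finset.range L, (b - v j)) *
      (1 + ∑ n ∈ Finset.range L, (∏ j ∈ (Finset.range L).erase n, (v n - v j)⁻¹) * (b - v n)⁻¹ *
        ∏ j ∈ Finset.range L, (v n - y j)) := by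
  have hd : (Lagrange.nodal (Finset.range L) y - Lagrange.nodal (Finset.range L) v).degree
      < (Finset.range L).card := by
    have h1 : (Lagrange.nodal (Finset.range L) y).degree = (Finset.range L).card := Lagrange.degree_nodal
    have h2 : (Lagrange.nodal (Finset.range L) v).degree = (Finset.range L).card := Lagrange.degree_nodal
    rw [← h1]
    apply Polynomial.degree_sub_lt_left (h1.trans h2.symm) Lagrange.nodal_ne_zero
    rw [Lagrange.nodal_monic, Lagrange.nodal_monic]
  have h := Lagrange.eq_interpolate_of_eval_eq
    (fun n => ∏ j ∈ Finset.range L, (v n - y j)) hv hd (by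
      intro i hi
      rw [Polynomial.eval_sub, Lagrange.eval_nodal, Lagrange.eval_nodal_at_node hi, sub_zero])
  have h2 := congrArg (Polynomial.eval b) h
  rw [Lagrange.eval_interpolate_not_at_node _ hb, Polynomial.eval_sub, Lagrange.eval_nodal,
    Lagrange.eval_nodal] at h2
  rw [mul_add, mul_one]
  simp only [Lagrange.nodalWeight] at h2
  linear_combination h2

lemma prod_erase_split (g : ℕ → ℂ) (n k : ℕ) :
    ∏ j ∈ (Finset.range (n + 1 + k)).erase n, g j =
      (∏ j ∈ Finset.range n, g j) * ∏ i ∈ Finset.range k, g (n + 1 + i) := by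
  have h : ∏ j ∈ (Finset.range (n + 1 + k)).erase n, g j =
      ∏ j ∈ (Finset.range (n + 1 + k)).erase n, (if j = n then 1 else g j) := by
    apply Finset.prod_congr rfl
    intro j hj
    rw [if_neg (Finset.ne_of_mem_erase hj)]
  rw [h, Finset.prod_erase _ (by simp), Finset.prod_range_add, Finset.prod_range_succ]
  simp only [if_true, mul_one]
  congr 1
  · apply Finset.prod_congr rfl
    intro j hj
    rw [if_neg (by have := Finset.mem_range.1 hj; omega)]
  · apply Finset.prod_congr rfl
    intro j hj
    rw [if_neg (by omega)]

lemma prod_low (p x : ℂ) (hp : p ≠ 0) (hx : x ≠ 0) (n : ℕ) :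
    ∏ j ∈ Finset.range n, (1 - x * p ^ j / p ^ n) =
      (∏ j ∈ Finset.range n, (-x / p ^ (j + 1))) * Qf p (p / x) n := by
  rw [Qf, ← Finset.prod_mul_distrib, ← Finset.prod_range_reflect]
  apply Finset.prod_congr rfl
  intro j hj
  have hj := Finset.mem_range.1 hj
  have : p ^ n = p ^ (n - 1 - j) * p ^ (j + 1) := by
    rw [← pow_add]; congr 1; omega
  rw [this]
  field_simp
  ring

lemma pf2 (p z b : ℂ) (hp : p ≠ 0) (hp1 : ‖p‖ < 1) (hz : z ≠ 0) (L : ℕ)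
    (hb : ∀ i < L, 1 - b * p ^ i ≠ 0) :
    ∏ j ∈ Finset.range L, ((1 - b * z * p ^ j) / (1 - b * p ^ j)) = z ^ L +
      ∑ n ∈ Finset.range L, z ^ n * (Qf p z (L - n) * Qf p (p / z) n /
        (Qf p p (L - 1 - n) * Qf p p n)) / (1 - b * p ^ n) := by
  have hinj : Function.Injective (fun j : ℕ => (p ^ j)⁻¹) := by
    intro i j h
    have h : p ^ i = p ^ j := inv_injective h
    have h' := congrArg norm h
    rw [norm_pow, norm_pow] at h'
    exact pow_right_injective₀ (norm_pos_iff.2 hp) hp1.ne h'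
  have hbv : ∀ i ∈ Finset.range L, b ≠ (p ^ i)⁻¹ := by
    intro i hi h
    apply hb i (Finset.mem_range.1 hi)
    rw [h, inv_mul_cancel₀ (pow_ne_zero _ hp), sub_self]
  have h := pf1 L (fun j => (p ^ j)⁻¹) (fun j => (z * p ^ j)⁻¹) hinj.injOn b hbv
  have e1 : ∏ j ∈ Finset.range L, ((1 - b * z * p ^ j) / (1 - b * p ^ j)) =
      z ^ L * ((∏ j ∈ Finset.range L, (b - (z * p ^ j)⁻¹)) /
        ∏ j ∈ Finset.range L, (b - (p ^ j)⁻¹)) := by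
    rw [← Finset.prod_div_distrib, ← Finset.card_range L, ← Finset.prod_const, Finset.card_range,
      ← Finset.prod_mul_distrib]
    apply Finset.prod_congr rfl
    intro j hj
    have h1 := hb j (Finset.mem_range.1 hj)
    have h2 := pow_ne_zero j hp
    have h3 : b * p ^ j - 1 ≠ 0 := fun h => h1 (by linear_combination -h)
    have : b - (p ^ j)⁻¹ = (b * p ^ j - 1) / p ^ j := by field_simp
    rw [this]
    field_simp
    ring
  have hne : ∏ j ∈ Finset.range L, (b - (p ^ j)⁻¹) ≠ 0 :=
    Finset.prod_ne_zero_iff.2 fun i hi => sub_ne_zero.2 (hbv i hi)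
  rw [e1, h, mul_div_cancel_left₀ _ hne, mul_add, mul_one, Finset.mul_sum]
  congr 1
  apply Finset.sum_congr rfl
  intro n hn
  have hn' := Finset.mem_range.1 hn
  obtain ⟨k, rfl⟩ : ∃ k, L = n + 1 + k := ⟨L - n - 1, by omega⟩
  have hpn := pow_ne_zero n hp
  have a1 : z ^ (n + 1 + k) * ∏ j ∈ Finset.range (n + 1 + k), ((p ^ n)⁻¹ - (z * p ^ j)⁻¹) =
      (∏ j ∈ Finset.range (n + 1 + k), (-1 / p ^ j)) *
        ∏ j ∈ Finset.range (n + 1 + k), (1 - z * p ^ j / p ^ n) := by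
    nth_rewrite 1 [← Finset.card_range (n + 1 + k)]
    rw [← Finset.prod_const, ← Finset.prod_mul_distrib, ← Finset.prod_mul_distrib]
    apply Finset.prod_congr rfl
    intro j hj
    have h2 := pow_ne_zero j hp
    field_simp
    ring
  have a2 : (∏ j ∈ (Finset.range (n + 1 + k)).erase n, ((p ^ n)⁻¹ - (p ^ j)⁻¹)⁻¹) *
      (∏ j ∈ (Finset.range (n + 1 + k)).erase n, (-1 / p ^ j)) =
      (∏ j ∈ (Finset.range (n + 1 + k)).erase n, (1 - 1 * p ^ j / p ^ n))⁻¹ := by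
    rw [← Finset.prod_mul_distrib, ← Finset.prod_inv_distrib]
    apply Finset.prod_congr rfl
    intro j hj
    have h2 := pow_ne_zero j hp
    have : (p ^ n)⁻¹ - (p ^ j)⁻¹ = (-1 / p ^ j) * (1 - 1 * p ^ j / p ^ n) := by
      field_simp
      ring
    rw [this, mul_inv]
    have : (-1 / p ^ j) ≠ 0 := by
      apply div_ne_zero _ h2
      norm_num
    field_simp
  have a3 : (-1 / p ^ n) * (b - (p ^ n)⁻¹)⁻¹ = 1 / (1 - b * p ^ n) := by
    have h1 := hb n hn'
    have h3 : b * p ^ n - 1 ≠ 0 := fun h => h1 (by linear_combination -h)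
    have : b - (p ^ n)⁻¹ = (b * p ^ n - 1) / p ^ n := by field_simp
    have h4 : 1 - b * p ^ n = -(b * p ^ n - 1) := by ring
    rw [this, h4, div_neg, inv_div]
    field_simp
  have a4 := Finset.mul_prod_erase (Finset.range (n + 1 + k)) (fun j => -1 / p ^ j) hn
  have a5 : z ^ (n + 1 + k) * ((∏ j ∈ (Finset.range (n + 1 + k)).erase n, ((p ^ n)⁻¹ - (p ^ j)⁻¹)⁻¹) *
      (b - (p ^ n)⁻¹)⁻¹ * ∏ j ∈ Finset.range (n + 1 + k), ((p ^ n)⁻¹ - (z * p ^ j)⁻¹)) =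
      (∏ j ∈ Finset.range (n + 1 + k), (1 - z * p ^ j / p ^ n)) *
      (∏ j ∈ (Finset.range (n + 1 + k)).erase n, (1 - 1 * p ^ j / p ^ n))⁻¹ * (1 / (1 - b * p ^ n)) := by
    rw [← a2, ← a3]
    rw [← a4] at a1
    linear_combination (∏ j ∈ (Finset.range (n + 1 + k)).erase n, ((p ^ n)⁻¹ - (p ^ j)⁻¹)⁻¹) *
      (b - (p ^ n)⁻¹)⁻¹ * a1
  refine a5.trans ?_
  rw [prod_erase_split, prod_low p 1 hp one_ne_zero, show n + 1 + k = n + (k + 1) by ring,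
    Finset.prod_range_add, prod_low p z hp hz]
  have b1 : ∏ x ∈ Finset.range (k + 1), (1 - z * p ^ (n + x) / p ^ n) = Qf p z (k + 1) := by
    apply Finset.prod_congr rfl
    intro j _
    rw [pow_add]
    field_simp
  have b2 : ∏ x ∈ Finset.range k, (1 - 1 * p ^ (n + 1 + x) / p ^ n) = Qf p p k := by
    apply Finset.prod_congr rfl
    intro j _
    rw [pow_add, pow_add]
    field_simp
  have b3 : ∏ j ∈ Finset.range n, (-z / p ^ (j + 1)) =
      z ^ n * ∏ j ∈ Finset.range n, (-1 / p ^ (j + 1)) := by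
    nth_rewrite 2 [← Finset.card_range n]
    rw [← Finset.prod_const, ← Finset.prod_mul_distrib]
    apply Finset.prod_congr rfl
    intro j _
    ring
  have b4 : ∏ j ∈ Finset.range n, (-1 / p ^ (j + 1)) ≠ 0 := by
    apply Finset.prod_ne_zero_iff.2
    intro j _
    apply div_ne_zero _ (pow_ne_zero _ hp)
    norm_num
  rw [b1, b2, b3, show n + (k + 1) - n = k + 1 by omega, show n + (k + 1) - 1 - n = k by omega,
    div_one, mul_inv, mul_inv]
  generalize ∏ j ∈ Finset.range n, (-1 / p ^ (j + 1)) = T at *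
  generalize Qf p (p / z) n = U
  simp only [div_eq_mul_inv, mul_inv, one_mul]
  have := mul_inv_cancel₀ b4
  linear_combination z ^ n * U * Qf p z (k + 1) * (Qf p p n)⁻¹ * (Qf p p k)⁻¹ * (1 - b * p ^ n)⁻¹ * this

lemma sum_Ico_reindex (N : ℕ) (g : ℤ → ℂ) :
    ∑ m ∈ Finset.Ico (-(N : ℤ)) N, g m = ∑ n ∈ Finset.range (N + N), g ((n : ℤ) - N) := by
  refine Finset.sum_nbij' (fun m => (m + N).toNat) (fun n => (n : ℤ) - N) ?_ ?_ ?_ ?_ ?_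
  · intro m hm
    have := Finset.mem_Ico.1 hm
    simp only [Finset.mem_range]
    omega
  · intro n hn
    have := Finset.mem_range.1 hn
    simp only [Finset.mem_Ico]
    omega
  · intro m hm
    have := Finset.mem_Ico.1 hm
    omega
  · intro n hn
    simp
  · intro m hm
    have := Finset.mem_Ico.1 hm
    congr 1
    omega

noncomputable def wt (p z : ℂ) (N : ℕ) (m : ℤ) : ℂ :=
  Qf p z (N - m).toNat * Qf p (p / z) (N + m).toNat /
    (Qf p p (N - 1 - m).toNat * Qf p p (N + m).toNat)

lemma pf3 (p z a : ℂ) (hp : p ≠ 0) (hp1 : ‖p‖ < 1) (hz : z ≠ 0) (ha : a ≠ 0)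
    (hb : ∀ i : ℤ, 1 - a * p ^ i ≠ 0) (N : ℕ) :
    Qf p (a * z) N * Qf p (p / (a * z)) N / (Qf p a N * Qf p (p / a) N) =
      z ^ N + ∑ m ∈ Finset.Ico (-(N : ℤ)) N, z ^ m / (1 - a * p ^ m) * wt p z N m := by
  have hpN := pow_ne_zero N hp
  have key : ∀ n : ℕ, a / p ^ N * p ^ n = a * p ^ ((n : ℤ) - N) := by
    intro n
    rw [zpow_sub₀ hp, zpow_natCast, zpow_natCast]
    ring
  have h := pf2 p z (a / p ^ N) hp hp1 hz (N + N) (by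
    intro i _
    rw [key]
    exact hb _)
  rw [sum_Ico_reindex]
  have e1 : ∏ j ∈ Finset.range (N + N), ((1 - a / p ^ N * z * p ^ j) / (1 - a / p ^ N * p ^ j)) =
      z ^ N * (Qf p (a * z) N * Qf p (p / (a * z)) N / (Qf p a N * Qf p (p / a) N)) := by
    rw [Finset.prod_div_distrib, Finset.prod_range_add, Finset.prod_range_add]
    have c1 : ∀ x : ℂ, ∏ j ∈ Finset.range N, (1 - x / p ^ N * p ^ (N + j)) = Qf p x N := by
      intro x
      apply Finset.prod_congr rfl
      intro j _
      rw [pow_add]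
      field_simp
    have c2 : ∀ x : ℂ, x ≠ 0 → ∏ j ∈ Finset.range N, (1 - x / p ^ N * p ^ j) =
        (∏ j ∈ Finset.range N, (-x / p ^ (j + 1))) * Qf p (p / x) N := by
      intro x hx
      rw [← prod_low p x hp hx]
      apply Finset.prod_congr rfl
      intro j _
      ring
    have c3 : ∏ j ∈ Finset.range N, (-(a * z) / p ^ (j + 1)) =
        z ^ N * ∏ j ∈ Finset.range N, (-a / p ^ (j + 1)) := by
      nth_rewrite 2 [← Finset.card_range N]
      rw [← Finset.prod_const, ← Finset.prod_mul_distrib]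
      apply Finset.prod_congr rfl
      intro j _
      ring
    have c4 : ∏ j ∈ Finset.range N, (-a / p ^ (j + 1)) ≠ 0 := by
      apply Finset.prod_ne_zero_iff.2
      intro j _
      exact div_ne_zero (neg_ne_zero.2 ha) (pow_ne_zero _ hp)
    have c5 : a / p ^ N * z = (a * z) / p ^ N := by ring
    rw [c5, c1, c1, c2 _ ha, c2 _ (mul_ne_zero ha hz), c3]
    generalize ∏ j ∈ Finset.range N, (-a / p ^ (j + 1)) = T at *
    generalize Qf p (p / (a * z)) N = U
    generalize Qf p (p / a) N = V
    simp only [div_eq_mul_inv, mul_inv]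
    have := mul_inv_cancel₀ c4
    linear_combination z ^ N * Qf p (a * z) N * U * (Qf p a N)⁻¹ * V⁻¹ * this
  rw [e1] at h
  apply mul_left_cancel₀ (pow_ne_zero N hz)
  rw [h, mul_add, ← pow_add, Finset.mul_sum]
  congr 1
  apply Finset.sum_congr rfl
  intro n hn
  have hn := Finset.mem_range.1 hn
  rw [key, zpow_sub₀ hz, zpow_natCast, zpow_natCast, wt,
    show ((N : ℤ) - ((n : ℤ) - N)).toNat = N + N - n by omega,
    show ((N : ℤ) + ((n : ℤ) - N)).toNat = n by omega,
    show ((N : ℤ) - 1 - ((n : ℤ) - N)).toNat = N + N - 1 - n by omega]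
  have := mul_inv_cancel₀ (pow_ne_zero N hz)
  simp only [div_eq_mul_inv]
  linear_combination -(z ^ n * (Qf p z (N + N - n) * Qf p (p * z⁻¹) n *
        (Qf p p (N + N - 1 - n) * Qf p p n)⁻¹) * (1 - a * p ^ ((n : ℤ) - N))⁻¹) * this

lemma summ_aux (p x : ℂ) (hp1 : ‖p‖ < 1) : Summable (fun n : ℕ => ‖-(x * p ^ n)‖) := by
  simp only [norm_neg, norm_mul, norm_pow]
  exact (summable_geometric_of_lt_one (norm_nonneg _) hp1).mul_left _

lemma Qf_tendsto (p x : ℂ) (hp1 : ‖p‖ < 1) :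
    Tendsto (Qf p x) atTop (𝓝 (qPochInf x p)) := by
  have h := (multipliable_one_add_of_summable (summ_aux p x hp1)).tendsto_prod_tprod_nat
  simp only [← sub_eq_add_neg] at h
  exact h

lemma qPochInf_ne_zero (p x : ℂ) (hp1 : ‖p‖ < 1) (h : ∀ n : ℕ, 1 - x * p ^ n ≠ 0) :
    qPochInf x p ≠ 0 := by
  have := tprod_one_add_ne_zero_of_summable (f := fun n : ℕ => -(x * p ^ n))
    (by simpa only [← sub_eq_add_neg] using h) (summ_aux p x hp1)
  simp only [← sub_eq_add_neg] at this
  exact this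

lemma bdd_of_tendsto (f : ℕ → ℂ) (l : ℂ) (h : Tendsto f atTop (𝓝 l)) : ∃ C, 0 ≤ C ∧ ∀ n, ‖f n‖ ≤ C := by
  obtain ⟨C, hC⟩ := (Metric.isBounded_range_of_tendsto f h).exists_norm_le
  exact ⟨C, (norm_nonneg _).trans (hC (f 0) ⟨0, rfl⟩), fun n => hC _ ⟨n, rfl⟩⟩

lemma qPochInf_continuous (p : ℂ) (hp1 : ‖p‖ < 1) : Continuous (fun x => qPochInf x p) := by
  rw [continuous_iff_continuousAt]
  intro x
  have h := Summable.hasProdLocallyUniformlyOn_nat_one_add (K := Metric.ball (0 : ℂ) (‖x‖ + 1))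
    (f := fun (n : ℕ) (y : ℂ) => -(y * p ^ n)) Metric.isOpen_ball
    (u := fun n => (‖x‖ + 1) * ‖p‖ ^ n)
    ((summable_geometric_of_lt_one (norm_nonneg _) hp1).mul_left _)
    (by
      refine Eventually.of_forall fun n y hy => ?_
      rw [norm_neg, norm_mul, norm_pow]
      have : ‖y‖ < ‖x‖ + 1 := by simpa using hy
      gcongr)
    (by intro n; fun_prop)
  have hc : ContinuousOn (fun y => qPochInf y p) (Metric.ball (0 : ℂ) (‖x‖ + 1)) := by
    have := h.tendstoLocallyUniformlyOn_finsetRange.continuousOn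
      (Frequently.of_forall (by intro n; fun_prop))
    simp only [← sub_eq_add_neg] at this
    exact this
  exact hc.continuousAt (Metric.isOpen_ball.mem_nhds (by simp))

lemma one_sub_pow_ne (p : ℂ) (hp1 : ‖p‖ < 1) (n : ℕ) : 1 - p * p ^ n ≠ 0 := by
  intro h
  have h : p ^ (n + 1) = 1 := by rw [pow_succ]; linear_combination -h
  have h' := congrArg norm h
  rw [norm_pow, norm_one] at h'
  exact (pow_lt_one₀ (norm_nonneg _) hp1 (Nat.succ_ne_zero n)).ne h'

lemma summable_main (p a : ℂ) (r : ℝ) (hp : p ≠ 0) (hp1 : ‖p‖ < 1) (ha : a ≠ 0)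
    (hr : ‖p‖ < r) (hr1 : r < 1) :
    Summable (fun m : ℤ => r ^ m / ‖1 - a * p ^ m‖) := by
  have hr0 : 0 < r := (norm_nonneg _).trans_lt hr
  have hpw : Tendsto (fun n : ℕ => p ^ n) atTop (𝓝 0) := tendsto_pow_atTop_nhds_zero_of_norm_lt_one hp1
  apply Summable.of_nat_of_neg
  · have h1 : Tendsto (fun n : ℕ => (1 - a * p ^ n)⁻¹) atTop (𝓝 (1 - a * 0)⁻¹) := by
      apply Tendsto.inv₀ _ (by simp)
      exact tendsto_const_nhds.sub (tendsto_const_nhds.mul hpw)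
    obtain ⟨C, hC0, hC⟩ := bdd_of_tendsto _ _ h1
    refine Summable.of_nonneg_of_le (fun n => by positivity) (fun n => ?_)
      ((summable_geometric_of_lt_one hr0.le hr1).mul_right C)
    have := hC n
    rw [norm_inv] at this
    rw [zpow_natCast, zpow_natCast, div_eq_mul_inv]
    gcongr
  · have h1 : Tendsto (fun n : ℕ => (p ^ n - a)⁻¹) atTop (𝓝 (0 - a)⁻¹) := by
      apply Tendsto.inv₀ _ (by simpa using ha)
      exact hpw.sub tendsto_const_nhds
    obtain ⟨C, hC0, hC⟩ := bdd_of_tendsto _ _ h1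
    have hlt : ‖p‖ / r < 1 := (div_lt_one hr0).2 hr
    refine Summable.of_nonneg_of_le (fun n => by positivity) (fun n => ?_)
      ((summable_geometric_of_lt_one (by positivity) hlt).mul_right C)
    have := hC n
    have e : r ^ (-(n : ℤ)) / ‖1 - a * p ^ (-(n : ℤ))‖ = (‖p‖ / r) ^ n * ‖(p ^ n - a)⁻¹‖ := by
      have hpn := pow_ne_zero n hp
      have : 1 - a * p ^ (-(n : ℤ)) = (p ^ n - a) / p ^ n := by
        rw [zpow_neg, zpow_natCast]
        field_simp
      rw [this, zpow_neg, zpow_natCast, norm_div, norm_inv, norm_pow, div_pow]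
      simp only [div_eq_mul_inv, mul_inv, inv_inv]
      ring
    rw [e]
    gcongr

lemma kronecker (p z a : ℂ) (hp : p ≠ 0) (hp1 : ‖p‖ < 1) (hpz : ‖p‖ < ‖z‖) (hz1 : ‖z‖ < 1)
    (ha : a ≠ 0) (hb : ∀ i : ℤ, 1 - a * p ^ i ≠ 0) :
    qPochInf (a * z) p * qPochInf (p / (a * z)) p / (qPochInf a p * qPochInf (p / a) p) =
      (∑' m : ℤ, z ^ m / (1 - a * p ^ m)) * (qPochInf z p * qPochInf (p / z) p /
        (qPochInf p p * qPochInf p p)) := by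
  have hz : z ≠ 0 := norm_pos_iff.1 ((norm_nonneg _).trans_lt hpz)
  have npp := qPochInf_ne_zero p p hp1 (one_sub_pow_ne p hp1)
  have na := qPochInf_ne_zero p a hp1 (fun n => by simpa using hb n)
  have npa := qPochInf_ne_zero p (p / a) hp1 (fun n h => hb (-((n : ℤ) + 1)) (by
    have e : p ^ (n + 1) = a := by
      have : p / a * p ^ n = 1 := by linear_combination -h
      field_simp at this
      rw [pow_succ]; linear_combination this
    rw [zpow_neg, ← Nat.cast_succ, zpow_natCast, e, mul_inv_cancel₀ ha, sub_self]))
  have hT := fun x => Qf_tendsto p x hp1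
  have lim1 : Tendsto (fun N => Qf p (a * z) N * Qf p (p / (a * z)) N / (Qf p a N * Qf p (p / a) N))
      atTop (𝓝 (qPochInf (a * z) p * qPochInf (p / (a * z)) p / (qPochInf a p * qPochInf (p / a) p))) :=
    ((hT _).mul (hT _)).div ((hT _).mul (hT _)) (mul_ne_zero na npa)
  set F : ℕ → ℤ → ℂ := fun N m => if m ∈ Finset.Ico (-(N : ℤ)) N then
    z ^ m / (1 - a * p ^ m) * wt p z N m else 0 with hF
  have hFs : ∀ N, ∑' m, F N m = ∑ m ∈ Finset.Ico (-(N : ℤ)) N, z ^ m / (1 - a * p ^ m) * wt p z N m := by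
    intro N
    rw [tsum_eq_sum (s := Finset.Ico (-(N : ℤ)) N) (fun m hm => if_neg hm)]
    exact Finset.sum_congr rfl fun m hm => if_pos hm
  obtain ⟨C1, h10, h1⟩ := bdd_of_tendsto _ _ (hT z)
  obtain ⟨C2, h20, h2⟩ := bdd_of_tendsto _ _ (hT (p / z))
  obtain ⟨C3, h30, h3⟩ := bdd_of_tendsto _ _ ((hT p).inv₀ npp)
  have lim2 : Tendsto (fun N => ∑' m, F N m) atTop (𝓝 (∑' m : ℤ, z ^ m / (1 - a * p ^ m) *
      (qPochInf z p * qPochInf (p / z) p / (qPochInf p p * qPochInf p p)))) := by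
    apply tendsto_tsum_of_dominated_convergence
      (bound := fun m => ‖z‖ ^ m / ‖1 - a * p ^ m‖ * (C1 * C2 * (C3 * C3)))
    · exact (summable_main p a ‖z‖ hp hp1 ha hpz hz1).mul_right _
    · intro m
      have t1 : Tendsto (fun N : ℕ => ((N : ℤ) - m).toNat) atTop atTop :=
        tendsto_atTop.2 fun b => by
          filter_upwards [eventually_ge_atTop (b + m.natAbs)] with N hN
          omega
      have t2 : Tendsto (fun N : ℕ => ((N : ℤ) + m).toNat) atTop atTop :=
        tendsto_atTop.2 fun b => by
          filter_upwards [eventually_ge_atTop (b + m.natAbs)] with N hN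
          omega
      have t3 : Tendsto (fun N : ℕ => ((N : ℤ) - 1 - m).toNat) atTop atTop :=
        tendsto_atTop.2 fun b => by
          filter_upwards [eventually_ge_atTop (b + 1 + m.natAbs)] with N hN
          omega
      have t : Tendsto (fun N : ℕ => z ^ m / (1 - a * p ^ m) * wt p z N m) atTop
          (𝓝 (z ^ m / (1 - a * p ^ m) * (qPochInf z p * qPochInf (p / z) p / (qPochInf p p * qPochInf p p)))) := by
        apply Tendsto.mul tendsto_const_nhds
        exact (((hT z).comp t1).mul ((hT (p / z)).comp t2)).div
          (((hT p).comp t3).mul ((hT p).comp t2)) (mul_ne_zero npp npp)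
      refine t.congr' ?_
      filter_upwards [eventually_ge_atTop (1 + m.natAbs)] with N hN
      rw [hF]
      simp only
      rw [if_pos (by rw [Finset.mem_Ico]; omega)]
    · refine Eventually.of_forall fun N m => ?_
      rw [hF]
      simp only
      split_ifs
      · rw [norm_mul, norm_div, norm_zpow, wt, div_eq_mul_inv (Qf p z _ * _), mul_inv, norm_mul, norm_mul,
          norm_mul (Qf p p _)⁻¹]
        have := h1 (N - m).toNat
        have := h2 (N + m).toNat
        have := h3 (N - 1 - m).toNat
        have := h3 (N + m).toNat
        gcongr
      · rw [norm_zero]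
        positivity
  rw [tsum_mul_right] at lim2
  have lim3 : Tendsto (fun N : ℕ => z ^ N) atTop (𝓝 0) := tendsto_pow_atTop_nhds_zero_of_norm_lt_one hz1
  have lim4 := lim3.add lim2
  rw [zero_add] at lim4
  refine tendsto_nhds_unique lim1 (lim4.congr fun N => ?_)
  rw [hFs, pf3 p z a hp hp1 hz ha hb N]

lemma qPochInf_ne_zero' (p x : ℂ) (hp1 : ‖p‖ < 1) (hx : ‖x‖ < 1) : qPochInf x p ≠ 0 := by
  apply qPochInf_ne_zero p x hp1
  intro n h
  have h : x * p ^ n = 1 := by linear_combination -h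
  have h' := congrArg norm h
  rw [norm_mul, norm_pow, norm_one] at h'
  have : ‖x‖ * ‖p‖ ^ n ≤ ‖x‖ * 1 := by
    gcongr
    exact pow_le_one₀ (norm_nonneg _) hp1.le
  linarith

lemma qPochInf_succ (p x : ℂ) (hp1 : ‖p‖ < 1) :
    qPochInf x p = (1 - x) * qPochInf (p * x) p := by
  have h1 := (tendsto_add_atTop_iff_nat 1).2 (Qf_tendsto p x hp1)
  have h2 := (Qf_tendsto p (p * x) hp1).const_mul (1 - x)
  refine tendsto_nhds_unique h1 (h2.congr fun n => ?_)
  rw [Qf, Qf, Finset.prod_range_succ', pow_zero, mul_one, mul_comm]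
  congr 1
  apply Finset.prod_congr rfl
  intro i _
  ring

lemma hasDerivAt_aux (G g : ℂ → ℂ) (z₀ : ℂ) (hz : z₀ ≠ 0) (hg : ContinuousAt g z₀)
    (h : ∀ᶠ z in 𝓝 z₀, G z = (1 - z₀ / z) * g z) : HasDerivAt G (z₀⁻¹ * g z₀) z₀ := by
  rw [hasDerivAt_iff_tendsto_slope]
  have h0 : G z₀ = 0 := by rw [h.self_of_nhds, div_self hz, sub_self, zero_mul]
  have hc : Tendsto (fun z => z⁻¹ * g z) (𝓝[≠] z₀) (𝓝 (z₀⁻¹ * g z₀)) :=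
    ((continuousAt_inv₀ hz).mul hg).tendsto.mono_left nhdsWithin_le_nhds
  refine hc.congr' ?_
  filter_upwards [h.filter_mono nhdsWithin_le_nhds, self_mem_nhdsWithin,
    (eventually_ne_nhds hz).filter_mono nhdsWithin_le_nhds] with z h1 h2 h3
  have h4 : z - z₀ ≠ 0 := sub_ne_zero.2 h2
  rw [slope_def_field, h0, h1, sub_zero]
  field_simp

/-- For 0 < |q| < 1, the bilateral series ∑_{n∈ℤ} n·q²ⁿ/(1 − q^{3n+1}) converges and equals
(q³;q³)⁴_∞ / ((q;q³)²_∞ (q²;q³)²_∞). -/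
theorem bilateral_sum_A3 (q : ℂ) (h0 : 0 < ‖q‖) (h1 : ‖q‖ < 1) :
    Summable (fun n : ℤ => (n : ℂ) * q ^ (2 * n) / (1 - q ^ (3 * n + 1))) ∧
    ∑' n : ℤ, (n : ℂ) * q ^ (2 * n) / (1 - q ^ (3 * n + 1)) =
      qPochInf (q ^ 3) (q ^ 3) ^ 4 /
        (qPochInf q (q ^ 3) ^ 2 * qPochInf (q ^ 2) (q ^ 3) ^ 2) := by
  
  have hq : q ≠ 0 := norm_pos_iff.1 h0
  have hp : q ^ 3 ≠ 0 := pow_ne_zero _ hq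
  have hq2 : q ^ 2 ≠ 0 := pow_ne_zero _ hq
  have hp1 : ‖q ^ 3‖ < 1 := by
    rw [norm_pow]
    exact pow_lt_one₀ (norm_nonneg _) h1 (by norm_num)
  have hz1 : ‖q ^ 2‖ < 1 := by
    rw [norm_pow]
    exact pow_lt_one₀ (norm_nonneg _) h1 (by norm_num)
  have hpz : ‖q ^ 3‖ < ‖q ^ 2‖ := by
    rw [norm_pow, norm_pow]
    exact pow_lt_pow_right_of_lt_one₀ h0 h1 (by norm_num)
  have key : ∀ m : ℤ, q * (q ^ 3) ^ m = q ^ (3 * m + 1) := by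
    intro m
    rw [zpow_add₀ hq, zpow_mul, zpow_one, mul_comm]
    norm_cast
  have hb : ∀ m : ℤ, 1 - q * (q ^ 3) ^ m ≠ 0 := by
    intro m h
    rw [key] at h
    have h : q ^ (3 * m + 1) = 1 := by linear_combination -h
    have h' := congrArg norm h
    rw [norm_zpow, norm_one] at h'
    have := (zpow_eq_one_iff_right₀ h0.le h1.ne).1 h'
    omega
  set p := q ^ 3 with hpdef
  set z₀ := q ^ 2 with hz0
  have npp := qPochInf_ne_zero' p p hp1 hp1
  have nq := qPochInf_ne_zero' p q hp1 h1
  have nz := qPochInf_ne_zero' p z₀ hp1 hz1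
  have hpq : p / q = z₀ := by rw [hpdef, hz0]; field_simp
  have hpz0 : p / z₀ = q := by rw [hpdef, hz0]; field_simp
  have hqz0 : q * z₀ = p := by rw [hpdef, hz0]; ring
  obtain ⟨r1, hr1, hr1'⟩ := exists_between hpz
  obtain ⟨r2, hr2, hr2'⟩ := exists_between hz1
  have hr10 : 0 < r1 := (norm_nonneg _).trans_lt hr1
  set U : Set ℂ := {z | r1 < ‖z‖ ∧ ‖z‖ < r2} with hU
  have hUo : IsOpen U :=
    (isOpen_lt continuous_const continuous_norm).inter (isOpen_lt continuous_norm continuous_const)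
  have hzU : z₀ ∈ U := ⟨hr1', hr2⟩
  have hUne : ∀ z ∈ U, z ≠ 0 := fun z hz => norm_pos_iff.1 (hr10.trans hz.1)
  have hsum := Complex.hasSum_deriv_of_summable_norm (F := fun (m : ℤ) (z : ℂ) => z ^ m / (1 - q * p ^ m))
    (u := fun m : ℤ => r1 ^ m / ‖1 - q * p ^ m‖ + r2 ^ m / ‖1 - q * p ^ m‖)
    ((summable_main p q r1 hp hp1 hq hr1 (hr1'.trans hz1)).add
      (summable_main p q r2 hp hp1 hq (hpz.trans hr2) hr2'))
    (by
      intro m z hz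
      exact ((differentiableAt_zpow.2 (Or.inl (hUne z hz))).div_const _).differentiableWithinAt)
    hUo
    (by
      intro m z hz
      rw [norm_div, norm_zpow, ← add_div]
      have hz0 : 0 < ‖z‖ := hr10.trans hz.1
      have hr20 : 0 < r2 := hz0.trans hz.2
      gcongr
      rcases le_total 0 m with hm | hm
      · have := zpow_le_zpow_left₀ hm hz0.le hz.2.le
        have : 0 < r1 ^ m := zpow_pos hr10 _
        linarith
      · have := zpow_le_zpow_left₀ (neg_nonneg.2 hm) hr10.le hz.1.le
        rw [zpow_neg, zpow_neg] at this
        have := (inv_le_inv₀ (zpow_pos hr10 _) (zpow_pos hz0 _)).1 this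
        have : 0 < r2 ^ m := zpow_pos hr20 _
        linarith)
    hzU
  set g : ℂ → ℂ := fun z => qPochInf p p ^ 2 * (qPochInf (q * z) p * qPochInf (p * (z₀ / z)) p) /
    ((qPochInf q p * qPochInf z₀ p) * (qPochInf z p * qPochInf (p / z) p)) with hg
  have hcont := qPochInf_continuous p hp1
  have hgc : ContinuousAt g z₀ := by
    have c0 : ∀ f : ℂ → ℂ, ContinuousAt f z₀ → ContinuousAt (fun z => qPochInf (f z) p) z₀ :=
      fun f hf => ContinuousAt.comp (g := fun x => qPochInf x p) hcont.continuousAt hf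
    have c1 : ContinuousAt (fun z => p / z) z₀ := continuousAt_const.div continuousAt_id hq2
    have c2 : ContinuousAt (fun z => p * (z₀ / z)) z₀ :=
      continuousAt_const.mul (continuousAt_const.div continuousAt_id hq2)
    have c3 : ContinuousAt (fun z => q * z) z₀ := continuousAt_const.mul continuousAt_id
    refine ContinuousAt.div (continuousAt_const.mul ((c0 _ c3).mul (c0 _ c2)))
      (continuousAt_const.mul ((c0 _ continuousAt_id).mul (c0 _ c1))) ?_
    simp only [id, hpz0]
    exact mul_ne_zero (mul_ne_zero nq nz) (mul_ne_zero nz nq)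
  have hG : ∀ᶠ z in 𝓝 z₀, (∑' m : ℤ, z ^ m / (1 - q * p ^ m)) = (1 - z₀ / z) * g z := by
    filter_upwards [hUo.mem_nhds hzU] with z hz
    have hzne := hUne z hz
    have k := kronecker p z q hp hp1 (hr1.trans hz.1) (hz.2.trans hr2') hq hb
    have e : p / (q * z) = z₀ / z := by rw [← hpq]; field_simp
    rw [e, hpq, qPochInf_succ p (z₀ / z) hp1] at k
    have n1 := qPochInf_ne_zero' p z hp1 (hz.2.trans hr2')
    have n2 := qPochInf_ne_zero' p (p / z) hp1 (by
      rw [norm_div]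
      exact (div_lt_one (norm_pos_iff.2 hzne)).2 (hr1.trans hz.1))
    rw [hg]
    simp only
    generalize (∑' m : ℤ, z ^ m / (1 - q * p ^ m)) = S at *
    generalize qPochInf (p / z) p = A1 at *
    generalize qPochInf (p * (z₀ / z)) p = A2 at *
    generalize qPochInf (q * z) p = A3 at *
    generalize qPochInf z p = A4 at *
    generalize qPochInf z₀ p = A5 at *
    generalize qPochInf q p = A6 at *
    generalize qPochInf p p = A7 at *
    generalize z₀ / z = W at *
    rw [div_eq_iff (mul_ne_zero nq nz)] at k
    rw [← mul_div_assoc, eq_div_iff (mul_ne_zero (mul_ne_zero nq nz) (mul_ne_zero n1 n2))]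
    have k2 : S * (A4 * A1 / (A7 * A7)) * (A6 * A5) * A7 ^ 2 = S * (A4 * A1) * (A6 * A5) := by
      field_simp
    linear_combination -k2 - A7 ^ 2 * k
  have hd := hasDerivAt_aux _ g z₀ hq2 hgc hG
  rw [hd.deriv] at hsum
  have hfin := hsum.mul_left z₀
  rw [mul_inv_cancel_left₀ hq2] at hfin
  have hgz : g z₀ = qPochInf p p ^ 4 / (qPochInf q p ^ 2 * qPochInf z₀ p ^ 2) := by
    rw [hg]
    simp only
    rw [hqz0, hpz0, div_self hq2, mul_one]
    congr 1 <;> ring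
  rw [hgz] at hfin
  have hfun : (fun m : ℤ => z₀ * deriv (fun z : ℂ => z ^ m / (1 - q * p ^ m)) z₀) =
      fun n : ℤ => (n : ℂ) * q ^ (2 * n) / (1 - q ^ (3 * n + 1)) := by
    funext m
    rw [deriv_div_const, deriv_zpow, key, zpow_sub₀ hq2, zpow_one, zpow_mul]
    have : (q ^ (2 : ℤ)) = z₀ := by rw [hz0]; norm_cast
    rw [this]
    field_simp
  rw [hfun] at hfin
  exact ⟨hfin.summable, hfin.tsum_eq⟩
end

section
/- For every complex number q with 0 < |q| < 1, the bilateral series identity ∑_{n=−∞}^{∞} (1 + q^{3n+1})·q^{3n+1}/(1 − q^{3n+1})³ = q·(q³;q³)_∞⁶ / ((q;q³)_∞³ (q²;q³)_∞³) holds, where both sides converge (every denominator 1 − q^{3n+1} is nonzero since |q^{3n+1}| ≠ 1). -/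
lemma qP_summable (a : ℂ) {p : ℂ} (hp : ‖p‖ < 1) : Summable (fun n : ℕ => ‖-(a * p ^ n)‖) := by
  simp only [norm_neg, norm_mul, norm_pow]
  exact (summable_geometric_of_lt_one (norm_nonneg _) hp).mul_left _

lemma qP_ne_zero {a p : ℂ} (hp : ‖p‖ < 1) (ha : ‖a‖ < 1) : qPochInf a p ≠ 0 := by
  unfold qPochInf
  simp only [sub_eq_add_neg]
  refine tprod_one_add_ne_zero_of_summable (fun n h => ?_) (qP_summable a hp)
  have h2 : a * p ^ n = 1 := by linear_combination -h
  have h3 : ‖a * p ^ n‖ < 1 := by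
    rw [norm_mul, norm_pow]
    calc ‖a‖ * ‖p‖ ^ n ≤ ‖a‖ * 1 := by
          gcongr
          exact pow_le_one₀ (norm_nonneg _) hp.le
      _ < 1 := by simpa using ha
  rw [h2] at h3
  simp at h3

lemma qP_step (a : ℂ) {p : ℂ} (hp : ‖p‖ < 1) :
    qPochInf a p = (1 - a) * qPochInf (p * a) p := by
  unfold qPochInf
  rw [tprod_eq_zero_mul']
  · simp only [pow_zero, mul_one]
    congr 1
    apply tprod_congr
    intro n
    ring
  · have := multipliable_one_add_of_summable (qP_summable (p * a) hp)
    refine this.congr fun n => ?_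
    ring

lemma qP_diff {p : ℂ} (hp : ‖p‖ < 1) : Differentiable ℂ (fun a => qPochInf a p) := by
  intro a
  have hopen : IsOpen (Metric.ball (0 : ℂ) (‖a‖ + 1)) := Metric.isOpen_ball
  have h := Summable.hasProdLocallyUniformlyOn_nat_one_add (f := fun n z => -(z * p ^ n))
    (K := Metric.ball (0 : ℂ) (‖a‖ + 1)) hopen
    (u := fun n => (‖a‖ + 1) * ‖p‖ ^ n)
    ((summable_geometric_of_lt_one (norm_nonneg _) hp).mul_left _)
    (Filter.Eventually.of_forall fun n z hz => by
      simp only [norm_neg, norm_mul, norm_pow]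
      have : ‖z‖ < ‖a‖ + 1 := by simpa using hz
      gcongr)
    (fun n => by fun_prop)
  have h2 : DifferentiableOn ℂ (fun z => ∏' n : ℕ, (1 + -(z * p ^ n)))
      (Metric.ball (0 : ℂ) (‖a‖ + 1)) := by
    refine h.differentiableOn (Filter.Eventually.of_forall fun s => ?_) hopen
    refine DifferentiableOn.fun_finsetProd fun i _ => ?_
    fun_prop
  have h3 := h2.differentiableAt (hopen.mem_nhds (by simp : a ∈ Metric.ball (0 : ℂ) (‖a‖ + 1)))
  simpa [qPochInf, sub_eq_add_neg] using h3

/-- theta -/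
noncomputable def qTh (p z : ℂ) : ℂ := qPochInf z p * qPochInf (p / z) p

lemma qTh_inv (p z : ℂ) (hp : ‖p‖ < 1) (hz : z ≠ 0) : qTh p (1 / z) = - qTh p z / z := by
  unfold qTh
  rw [qP_step (1 / z) hp, qP_step z hp]
  have h1 : p * (1 / z) = p / z := by ring
  have h2 : p / (1 / z) = p * z := by field_simp
  rw [h1, h2]
  field_simp
  ring

lemma qTh_mul (p z : ℂ) (hp0 : p ≠ 0) (hp : ‖p‖ < 1) (hz : z ≠ 0) :
    qTh p (p * z) = - qTh p z / z := by
  rw [← qTh_inv p z hp hz]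
  unfold qTh
  have h1 : p / (p * z) = 1 / z := by field_simp
  have h2 : p / (1 / z) = p * z := by field_simp
  rw [h1, h2]
  ring

lemma qTh_eq (p z : ℂ) (hp : ‖p‖ < 1) :
    qTh p z = (1 - z) * (qPochInf (p * z) p * qPochInf (p / z) p) := by
  unfold qTh
  rw [qP_step z hp]
  ring

lemma qTh_diff {p z : ℂ} (hp : ‖p‖ < 1) (hz : z ≠ 0) : DifferentiableAt ℂ (qTh p) z := by
  unfold qTh
  have h := qP_diff hp
  refine DifferentiableAt.mul (h z) ?_
  exact DifferentiableAt.comp z (h (p / z)) (by fun_prop (disch := assumption))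

/-- x/(1-x)^2 -/
noncomputable def qf (x : ℂ) : ℂ := x / (1 - x) ^ 2

lemma qf_inv (x : ℂ) (hx : x ≠ 0) : qf (1 / x) = qf x := by
  unfold qf
  by_cases h : x = 1
  · simp [h]
  · have h1 : 1 - x ≠ 0 := fun h' => h (by linear_combination -h')
    have h2 : 1 - 1 / x ≠ 0 := by
      intro h'
      field_simp at h'
      apply h
      linear_combination h'
    have h3 : x - 1 ≠ 0 := fun h' => h (by linear_combination h')
    rw [div_eq_div_iff (pow_ne_zero 2 h2) (pow_ne_zero 2 h1)]
    field_simp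
    ring

lemma qf_bound {x : ℂ} {r : ℝ} (hr : r < 1) (hx : ‖x‖ ≤ r) : ‖qf x‖ ≤ ‖x‖ / (1 - r) ^ 2 := by
  unfold qf
  rw [norm_div, norm_pow]
  have h1 : 1 - r ≤ ‖1 - x‖ := by
    have := norm_sub_norm_le (1 : ℂ) x
    rw [norm_one] at this
    linarith
  have h2 : 0 < 1 - r := by linarith
  gcongr

/-- annulus -/
def qAnn (s : ℝ) : Set ℂ := {z | s < ‖z‖ ∧ ‖z‖ * s < 1}

lemma qAnn_open (s : ℝ) : IsOpen (qAnn s) := by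
  unfold qAnn
  exact (isOpen_lt (by fun_prop) (by fun_prop)).and (isOpen_lt (by fun_prop) (by fun_prop))

/-- terms with the `n = 0` one removed -/
noncomputable def qFt (p : ℂ) (n : ℤ) (z : ℂ) : ℂ := if n = 0 then 0 else qf (z * p ^ n)

lemma qFt_bound {p : ℂ} {s : ℝ} (hp0 : 0 < ‖p‖) (hps : ‖p‖ < s) (hs : s < 1) (n : ℤ) (z : ℂ)
    (hz : z ∈ qAnn s) :
    ‖qFt p n z‖ ≤ (1 / s / (1 - ‖p‖ / s) ^ 2) * ‖p‖ ^ n.natAbs ∧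
      (n ≠ 0 → ‖z * p ^ n‖ ≠ 1) := by
  have hs0 : 0 < s := hp0.trans hps
  have hpne : p ≠ 0 := norm_pos_iff.mp hp0
  have hp1 : ‖p‖ < 1 := hps.trans hs
  have hz0 : 0 < ‖z‖ := hs0.trans hz.1
  have hzne : z ≠ 0 := norm_pos_iff.mp hz0
  have hr : ‖p‖ / s < 1 := (div_lt_one hs0).mpr hps
  have key : ∀ y : ℂ, ∀ m : ℕ, m ≠ 0 → ‖y‖ ≤ 1 / s * ‖p‖ ^ m →
      ‖qf y‖ ≤ (1 / s / (1 - ‖p‖ / s) ^ 2) * ‖p‖ ^ m ∧ ‖y‖ < 1 := by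
    intro y m hm hy
    have h1 : ‖p‖ ^ m ≤ ‖p‖ := pow_le_of_le_one (norm_nonneg _) hp1.le hm
    have h2 : ‖y‖ ≤ ‖p‖ / s := by
      refine hy.trans ?_
      rw [div_mul_eq_mul_div, one_mul]
      gcongr
    refine ⟨(qf_bound hr h2).trans ?_, h2.trans_lt hr⟩
    rw [div_mul_eq_mul_div]
    gcongr
  by_cases hn : n = 0
  · subst hn
    refine ⟨?_, fun h => absurd rfl h⟩
    simp only [qFt, if_true, norm_zero]
    positivity
  have hz1 : ‖z‖ ≤ 1 / s := by
    rw [le_div_iff₀ hs0]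
    exact hz.2.le
  have hz2 : ‖z‖⁻¹ ≤ 1 / s := by
    rw [one_div]
    gcongr
    exact hz.1.le
  simp only [qFt, if_neg hn]
  rcases Int.natAbs_eq n with h | h
  · have h3 := key (z * p ^ n) n.natAbs (by omega) (by
      rw [h]
      simp only [Int.natAbs_natCast, zpow_natCast, norm_mul, norm_pow]
      gcongr)
    exact ⟨h3.1, fun _ => h3.2.ne⟩
  · have h3 := key (1 / (z * p ^ n)) n.natAbs (by omega) (by
      rw [h]
      simp only [Int.natAbs_neg, Int.natAbs_natCast, zpow_neg, zpow_natCast,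
        norm_mul, norm_pow, norm_inv, one_div, mul_inv, inv_inv]
      rw [one_div] at hz2
      gcongr)
    rw [qf_inv _ (mul_ne_zero hzne (zpow_ne_zero _ hpne))] at h3
    refine ⟨h3.1, fun _ h4 => ?_⟩
    have h5 := h3.2
    rw [norm_div, h4] at h5
    simp at h5

lemma qFt_sum {p : ℂ} (hp1 : ‖p‖ < 1) (C : ℝ) :
    Summable (fun n : ℤ => C * ‖p‖ ^ n.natAbs) := by
  apply Summable.mul_left
  apply Summable.of_nat_of_neg
  · simpa using summable_geometric_of_lt_one (norm_nonneg _) hp1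
  · simpa using summable_geometric_of_lt_one (norm_nonneg _) hp1

lemma qf_diffAt {x : ℂ} (hx : x ≠ 1) : DifferentiableAt ℂ qf x := by
  have h1 : (1 - x) ^ 2 ≠ 0 := pow_ne_zero 2 fun h' => hx (by linear_combination -h')
  unfold qf
  fun_prop (disch := assumption)

lemma qFt_diff {p : ℂ} {s : ℝ} (hp0 : 0 < ‖p‖) (hps : ‖p‖ < s) (hs : s < 1) (n : ℤ) :
    DifferentiableOn ℂ (qFt p n) (qAnn s) := by
  intro z hz
  apply DifferentiableAt.differentiableWithinAt
  by_cases hn : n = 0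
  · have : qFt p n = fun _ => 0 := by
      ext z
      simp [qFt, hn]
    rw [this]
    fun_prop
  · have : qFt p n = fun z => qf (z * p ^ n) := by
      ext z
      simp [qFt, hn]
    rw [this]
    have h1 := (qFt_bound hp0 hps hs n z hz).2 hn
    have h2 : z * p ^ n ≠ 1 := fun h => h1 (by rw [h, norm_one])
    exact DifferentiableAt.comp z (qf_diffAt h2) (by fun_prop)

/-- regular part of P -/
noncomputable def qR (p z : ℂ) : ℂ := ∑' n : ℤ, qFt p n z

/-- P -/
noncomputable def qPP (p z : ℂ) : ℂ := ∑' n : ℤ, qf (z * p ^ n)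

lemma qAnn_sub {p z : ℂ} (hp1 : ‖p‖ < 1) (hz : z ∈ qAnn ‖p‖) :
    ∃ s, ‖p‖ < s ∧ s < 1 ∧ z ∈ qAnn s := by
  have hz0 : 0 < ‖z‖ := (norm_nonneg p).trans_lt hz.1
  have h : ‖p‖ < min 1 (min ‖z‖ (1 / ‖z‖)) := by
    refine lt_min hp1 (lt_min hz.1 ?_)
    rw [lt_div_iff₀ hz0]
    linarith [hz.2]
  obtain ⟨s, h1, h2⟩ := exists_between h
  rw [lt_min_iff, lt_min_iff] at h2
  refine ⟨s, h1, h2.1, h2.2.1, ?_⟩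
  have := (lt_div_iff₀ hz0).mp h2.2.2
  linarith

lemma qR_diff {p : ℂ} (hp0 : 0 < ‖p‖) (hp1 : ‖p‖ < 1) : DifferentiableOn ℂ (qR p) (qAnn ‖p‖) := by
  intro z hz
  obtain ⟨s, h1, h2, h3⟩ := qAnn_sub hp1 hz
  have := Complex.differentiableOn_tsum_of_summable_norm (qFt_sum hp1 _)
    (qFt_diff hp0 h1 h2) (qAnn_open s) (fun n w hw => (qFt_bound hp0 h1 h2 n w hw).1)
  exact (this.differentiableAt ((qAnn_open s).mem_nhds h3)).differentiableWithinAt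

lemma qPP_eq {p z : ℂ} (hp0 : 0 < ‖p‖) (hp1 : ‖p‖ < 1) (hz : z ∈ qAnn ‖p‖) :
    qPP p z = qf z + qR p z := by
  obtain ⟨s, h1, h2, h3⟩ := qAnn_sub hp1 hz
  have hs : Summable (fun n => qFt p n z) :=
    (qFt_sum hp1 _).of_norm_bounded (fun n => (qFt_bound hp0 h1 h2 n z h3).1)
  have := (hasSum_ite_eq (0 : ℤ) (qf z)).add hs.hasSum
  rw [← qR] at this
  rw [← this.tsum_eq]
  unfold qPP
  apply tsum_congr
  intro n
  by_cases hn : n = 0 <;> simp [qFt, hn]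

lemma qPP_deriv {p z : ℂ} (hp0 : 0 < ‖p‖) (hp1 : ‖p‖ < 1) (hz : z ∈ qAnn ‖p‖) (hz1 : z ≠ 1) :
    HasSum (fun n : ℤ => (1 + z * p ^ n) * p ^ n / (1 - z * p ^ n) ^ 3) (deriv (qPP p) z) := by
  have hd1 : DifferentiableAt ℂ (qR p) z :=
    (qR_diff hp0 hp1).differentiableAt ((qAnn_open _).mem_nhds hz)
  have hE : qPP p =ᶠ[nhds z] fun z => qf z + qR p z := by
    filter_upwards [(qAnn_open _).mem_nhds hz] with w hw using qPP_eq hp0 hp1 hw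
  rw [hE.deriv_eq, deriv_fun_add (qf_diffAt hz1) hd1]
  obtain ⟨s, h1, h2, h3⟩ := qAnn_sub hp1 hz
  have hs := Complex.hasSum_deriv_of_summable_norm (qFt_sum hp1 _)
    (qFt_diff hp0 h1 h2) (qAnn_open s) (fun n w hw => (qFt_bound hp0 h1 h2 n w hw).1) h3
  have h4 := (hasSum_ite_eq (0 : ℤ) (deriv qf z)).add hs
  refine h4.congr_fun ?_
  intro n
  have hder : ∀ x : ℂ, x ≠ 1 → HasDerivAt qf ((1 + x) / (1 - x) ^ 3) x := by
    intro x hx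
    have h1 : (1 - x) ≠ 0 := fun h' => hx (by linear_combination -h')
    have := (hasDerivAt_id x).div (((hasDerivAt_const x (1 : ℂ)).sub (hasDerivAt_id x)).pow 2)
      (pow_ne_zero 2 h1)
    refine this.congr_deriv ?_
    simp
    field_simp
    ring
  by_cases hn : n = 0
  · have : qFt p n = fun _ => 0 := by
      ext z
      simp [qFt, hn]
    rw [this, hn, (hder z hz1).deriv]
    simp
  · have : qFt p n = fun z => qf (z * p ^ n) := by
      ext z
      simp [qFt, hn]
    rw [this, if_neg hn]
    have h1 := (qFt_bound hp0 h1 h2 n z h3).2 hn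
    have h2 : z * p ^ n ≠ 1 := fun h => h1 (by rw [h, norm_one])
    have h5 := (hder _ h2).comp z ((hasDerivAt_id z).mul_const (p ^ n))
    have h6 : deriv (fun z => qf (z * p ^ n)) z = _ := h5.deriv
    rw [h6]
    simp
    ring

lemma qPP_mul (p z : ℂ) (hp0 : p ≠ 0) : qPP p (p * z) = qPP p z := by
  unfold qPP
  rw [← (Equiv.addRight (1 : ℤ)).tsum_eq (fun n : ℤ => qf (z * p ^ n))]
  apply tsum_congr
  intro n
  simp only [Equiv.coe_addRight]
  rw [zpow_add_one₀ hp0]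
  congr 1
  ring

lemma qPP_inv (p z : ℂ) (hp0 : p ≠ 0) (hz : z ≠ 0) : qPP p (1 / z) = qPP p z := by
  unfold qPP
  rw [← (Equiv.neg ℤ).tsum_eq (fun n : ℤ => qf (z * p ^ n))]
  apply tsum_congr
  intro n
  simp only [Equiv.neg_apply]
  rw [← qf_inv (z * p ^ (-n)) (mul_ne_zero hz (zpow_ne_zero _ hp0)), zpow_neg]
  congr 1
  field_simp

lemma qLiou {p : ℂ} (hp0 : 0 < ‖p‖) (hp1 : ‖p‖ < 1) (K : ℂ → ℂ)
    (hd : DifferentiableOn ℂ K (qAnn ‖p‖))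
    (hper : ∀ z ∈ qAnn ‖p‖, 1 < ‖z‖ → K (p * z) = K z) :
    ∀ z ∈ qAnn ‖p‖, ∀ w ∈ qAnn ‖p‖, K z = K w := by
  set r := Real.sqrt ‖p‖ with hr
  have hrr : r * r = ‖p‖ := Real.mul_self_sqrt hp0.le
  have hr0 : 0 < r := Real.sqrt_pos.mpr hp0
  have hr1 : r < 1 := by nlinarith
  have hpr : ‖p‖ < r := by nlinarith
  have hpne : p ≠ 0 := norm_pos_iff.mp hp0
  let C : Set ℂ := {z | r ≤ ‖z‖ ∧ ‖z‖ * r ≤ 1}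
  have hCsub : C ⊆ qAnn ‖p‖ := by
    intro z hz
    have h1 : r ≤ ‖z‖ := hz.1
    have h2 : ‖z‖ * r ≤ 1 := hz.2
    refine ⟨hpr.trans_le h1, ?_⟩
    nlinarith
  have hCc : IsCompact C := by
    apply Metric.isCompact_of_isClosed_isBounded
    · exact (isClosed_le (by fun_prop) (by fun_prop)).and (isClosed_le (by fun_prop) (by fun_prop))
    · refine (Metric.isBounded_closedBall (x := (0 : ℂ)) (r := 1 / r)).subset ?_
      intro z hz
      have h2 : ‖z‖ * r ≤ 1 := hz.2
      simpa [Metric.mem_closedBall, le_div_iff₀ hr0] using (le_div_iff₀ hr0).mpr h2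
  have hCn : C.Nonempty := ⟨1, by simp [C, hr1.le]⟩
  obtain ⟨z0, hz0, hmax⟩ := hCc.exists_isMaxOn hCn (hd.continuousOn.mono hCsub).norm
  have hmax2 : ∀ z ∈ qAnn ‖p‖, ‖K z‖ ≤ ‖K z0‖ := by
    intro z hz
    have ha : ‖p‖ < ‖z‖ := hz.1
    have hb : ‖z‖ * ‖p‖ < 1 := hz.2
    by_cases h1 : r ≤ ‖z‖
    · by_cases h2 : ‖z‖ * r ≤ 1
      · exact hmax ⟨h1, h2⟩
      · push Not at h2
        rw [← hper z hz (by nlinarith)]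
        apply hmax
        refine ⟨?_, ?_⟩
        · rw [norm_mul]
          nlinarith
        · rw [norm_mul]
          nlinarith
    · push Not at h1
      have hzp : ‖z / p‖ = ‖z‖ / ‖p‖ := norm_div _ _
      have h3 : 1 < ‖z / p‖ := by
        rw [hzp, lt_div_iff₀ hp0]
        linarith
      have h4 : ‖z / p‖ * r ≤ 1 := by
        rw [hzp, div_mul_eq_mul_div, div_le_iff₀ hp0]
        nlinarith
      have h5 : z / p ∈ C := ⟨by linarith, h4⟩
      have h6 := hper _ (hCsub h5) h3
      rw [mul_div_cancel₀ _ hpne] at h6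
      rw [h6]
      exact hmax h5
  let S : Set ℂ := {u | Real.log ‖p‖ < u.re} ∩ {u | u.re < -Real.log ‖p‖}
  have hS : ∀ u, u ∈ S ↔ Complex.exp u ∈ qAnn ‖p‖ := by
    intro u
    simp only [S, qAnn, Set.mem_inter_iff, Set.mem_ofPred_eq, Complex.norm_exp]
    refine and_congr (Real.log_lt_iff_lt_exp hp0) ?_
    conv_rhs => rw [← Real.exp_log hp0, ← Real.exp_add]
    rw [Real.exp_lt_one_iff]
    constructor <;> intro h <;> linarith
  have hSc : IsPreconnected S :=
    ((convex_halfSpace_re_gt _).inter (convex_halfSpace_re_lt _)).isPreconnected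
  have hSo : IsOpen S :=
    (isOpen_lt continuous_const Complex.continuous_re).inter
      (isOpen_lt Complex.continuous_re continuous_const)
  have hkd : DifferentiableOn ℂ (fun u => K (Complex.exp u)) S :=
    hd.comp Complex.differentiable_exp.differentiableOn (fun u hu => (hS u).mp hu)
  have hz0ne : z0 ≠ 0 := norm_pos_iff.mp (hr0.trans_le hz0.1)
  have hm : IsMaxOn (norm ∘ (fun u => K (Complex.exp u))) S (Complex.log z0) := by
    intro u hu
    simp only [Function.comp, Set.mem_ofPred_eq, Complex.exp_log hz0ne]
    exact hmax2 _ ((hS u).mp hu)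
  have hmem : Complex.log z0 ∈ S := by
    rw [hS, Complex.exp_log hz0ne]
    exact hCsub hz0
  have heq := Complex.eqOn_of_isPreconnected_of_isMaxOn_norm hSc hSo hkd hmem hm
  have hall : ∀ z ∈ qAnn ‖p‖, K z = K z0 := by
    intro z hz
    have hzne : z ≠ 0 := norm_pos_iff.mp (hp0.trans hz.1)
    have h1 : Complex.log z ∈ S := by
      rw [hS, Complex.exp_log hzne]
      exact hz
    simpa [Complex.exp_log hzne, Complex.exp_log hz0ne] using heq h1
  intro z hz w hw
  rw [hall z hz, hall w hw]

/-- regular part of theta -/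
noncomputable def qB (p z : ℂ) : ℂ := qPochInf (p * z) p * qPochInf (p / z) p

lemma qB_ne {p z : ℂ} (hp0 : 0 < ‖p‖) (hp1 : ‖p‖ < 1) (hz : z ∈ qAnn ‖p‖) : qB p z ≠ 0 := by
  have hz0 : 0 < ‖z‖ := hp0.trans hz.1
  refine mul_ne_zero (qP_ne_zero hp1 ?_) (qP_ne_zero hp1 ?_)
  · rw [norm_mul, mul_comm]
    exact hz.2
  · rw [norm_div, div_lt_one hz0]
    exact hz.1

lemma qB_diff {p z : ℂ} (hp : ‖p‖ < 1) (hz : z ≠ 0) : DifferentiableAt ℂ (qB p) z := by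
  unfold qB
  have h := qP_diff hp
  refine DifferentiableAt.mul ?_ ?_
  · exact DifferentiableAt.comp z (h (p * z)) (by fun_prop)
  · exact DifferentiableAt.comp z (h (p / z)) (by fun_prop (disch := assumption))

lemma qMain {p w : ℂ} (hp0 : 0 < ‖p‖) (hp1 : ‖p‖ < 1) (hw : w ∈ qAnn ‖p‖) (hw1 : ‖w‖ < 1) :
    ∀ z ∈ qAnn ‖p‖, z ≠ 1 → qPP p z - qPP p w =
      (-w * qPochInf p p ^ 4 / qTh p w ^ 2) * (qTh p (z * w) * qTh p (z / w) / qTh p z ^ 2) := by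
  have hpne : p ≠ 0 := norm_pos_iff.mp hp0
  have hne : ∀ z ∈ qAnn ‖p‖, z ≠ 0 := fun z hz => norm_pos_iff.mp (hp0.trans hz.1)
  have hwne := hne w hw
  have hwne1 : w ≠ 1 := by
    rintro rfl
    simp at hw1
  have hTB : ∀ z, qTh p z = (1 - z) * qB p z := fun z => qTh_eq p z hp1
  have hone : (1 : ℂ) ∈ qAnn ‖p‖ := by simp [qAnn, hp1]
  have hsub : ∀ z : ℂ, z ≠ 1 → 1 - z ≠ 0 := fun z hz h => hz (by linear_combination -h)
  have hTw : qTh p w ≠ 0 := by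
    rw [hTB]
    exact mul_ne_zero (hsub w hwne1) (qB_ne hp0 hp1 hw)
  have hAp : qPochInf p p ≠ 0 := qP_ne_zero hp1 hp1
  set c := -w * qPochInf p p ^ 4 / qTh p w ^ 2 with hc
  let X : ℂ → ℂ := fun z => qTh p (z * w) * qTh p (z / w) / qTh p z ^ 2
  let Y : ℂ → ℂ := fun z => qTh p (z * w) * qTh p (z / w) / qB p z ^ 2
  let E : ℂ → ℂ := fun z => qPP p z - qPP p w - c * X z
  let H : ℂ → ℂ := fun z => z + (1 - z) ^ 2 * (qR p z - qPP p w) - c * Y z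
  -- relation between E and H
  have hEH : ∀ z ∈ qAnn ‖p‖, z ≠ 1 → H z = (1 - z) ^ 2 * E z := by
    intro z hz hz1
    have h1 := hsub z hz1
    have h2 := qB_ne hp0 hp1 hz
    simp only [H, E, X, Y]
    rw [qPP_eq hp0 hp1 hz, hTB z, qf]
    field_simp
    ring
  have hXper : ∀ z, z ≠ 0 → X (p * z) = X z := by
    intro z hz
    simp only [X]
    rw [mul_assoc, mul_div_assoc p z w, qTh_mul p _ hpne hp1 (mul_ne_zero hz hwne),
      qTh_mul p _ hpne hp1 (div_ne_zero hz hwne), qTh_mul p _ hpne hp1 hz]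
    by_cases h : qTh p z = 0
    · simp [h]
    · field_simp
  have hXinv : ∀ z, z ≠ 0 → X (1 / z) = X z := by
    intro z hz
    simp only [X]
    have h1 : 1 / z * w = 1 / (z / w) := by field_simp
    have h2 : 1 / z / w = 1 / (z * w) := by field_simp
    rw [h1, h2, qTh_inv p _ hp1 (mul_ne_zero hz hwne),
      qTh_inv p _ hp1 (div_ne_zero hz hwne), qTh_inv p _ hp1 hz]
    by_cases h : qTh p z = 0
    · simp [h]
    · field_simp
  have hEper : ∀ z, z ≠ 0 → E (p * z) = E z := by
    intro z hz
    simp only [E]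
    rw [hXper z hz, qPP_mul p z hpne]
  have hEinv : ∀ z, z ≠ 0 → E (1 / z) = E z := by
    intro z hz
    simp only [E]
    rw [hXinv z hz, qPP_inv p z hpne hz]
  have hT1 : qTh p 1 = 0 := by
    rw [hTB]
    simp
  have hEw : E w = 0 := by
    simp only [E, X]
    rw [div_self hwne, hT1]
    simp
  have hH1 : H 1 = 0 := by
    simp only [H, Y, qB]
    rw [one_mul, qTh_inv p w hp1 hwne, hc, mul_one, div_one]
    field_simp
    ring
  have hHd : DifferentiableOn ℂ H (qAnn ‖p‖) := by
    intro z hz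
    apply DifferentiableAt.differentiableWithinAt
    have hz0 := hne z hz
    have hR : DifferentiableAt ℂ (qR p) z :=
      (qR_diff hp0 hp1).differentiableAt ((qAnn_open _).mem_nhds hz)
    have h1 : DifferentiableAt ℂ (fun z => qTh p (z * w)) z :=
      DifferentiableAt.comp (f := fun z => z * w) z (qTh_diff hp1 (mul_ne_zero hz0 hwne)) (by fun_prop)
    have h2 : DifferentiableAt ℂ (fun z => qTh p (z / w)) z :=
      DifferentiableAt.comp (f := fun z => z / w) z (qTh_diff hp1 (div_ne_zero hz0 hwne)) (by fun_prop)
    have h3 := qB_diff hp1 hz0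
    have hY : DifferentiableAt ℂ Y z :=
      (h1.mul h2).div (h3.pow 2) (pow_ne_zero 2 (qB_ne hp0 hp1 hz))
    simp only [H]
    fun_prop
  have hnhds : qAnn ‖p‖ ∈ nhds (1 : ℂ) := (qAnn_open _).mem_nhds hone
  have hinvmem : ∀ z ∈ qAnn ‖p‖, 1 / z ∈ qAnn ‖p‖ := by
    intro z hz
    have hz0 : 0 < ‖z‖ := hp0.trans hz.1
    refine ⟨?_, ?_⟩
    · rw [norm_div, norm_one, lt_div_iff₀ hz0]
      linarith [hz.2]
    · rw [norm_div, norm_one, div_mul_eq_mul_div, div_lt_one hz0]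
      linarith [hz.1]
  have hHsym : ∀ z ∈ qAnn ‖p‖, z ^ 2 * H (1 / z) = H z := by
    intro z hz
    by_cases hz1 : z = 1
    · rw [hz1]
      simp
    · have hz0 := hne z hz
      have h3 : 1 / z ≠ 1 := by
        intro h
        field_simp at h
        exact hz1 h.symm
      rw [hEH z hz hz1, hEH _ (hinvmem z hz) h3, hEinv z hz0]
      field_simp
      ring
  have hHd1 : HasDerivAt H (deriv H 1) 1 := (hHd.differentiableAt hnhds).hasDerivAt
  have hderiv : deriv H 1 = 0 := by
    have hi : HasDerivAt (fun z : ℂ => 1 / z) (-1) 1 := by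
      have := hasDerivAt_inv (one_ne_zero : (1 : ℂ) ≠ 0)
      simpa [one_div] using this
    have hHd1' : HasDerivAt H (deriv H 1) (1 / 1) := by simpa using hHd1
    have h1 := HasDerivAt.comp (1 : ℂ) hHd1' hi
    have h2 := ((hasDerivAt_id (1 : ℂ)).pow 2).mul h1
    have h3 : H =ᶠ[nhds 1] (id ^ 2 * (H ∘ fun z : ℂ => 1 / z)) := by
      filter_upwards [hnhds] with z hz
      simpa using (hHsym z hz).symm
    have h4 := (h2.congr_of_eventuallyEq h3).unique hHd1
    simp [hH1] at h4
    have h5 : (2 : ℂ) * deriv H 1 = 0 := by linear_combination -h4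
    simpa using h5
  let K : ℂ → ℂ := dslope (dslope H 1) 1
  have hKd : DifferentiableOn ℂ K (qAnn ‖p‖) :=
    (Complex.differentiableOn_dslope hnhds).mpr ((Complex.differentiableOn_dslope hnhds).mpr hHd)
  have hKE : ∀ z ∈ qAnn ‖p‖, z ≠ 1 → K z = E z := by
    intro z hz hz1
    have h1 : z - 1 ≠ 0 := sub_ne_zero.mpr hz1
    simp only [K]
    rw [dslope_of_ne _ hz1, slope_def_field, dslope_of_ne _ hz1, dslope_same, slope_def_field,
      hderiv, hH1, hEH z hz hz1]
    field_simp
    ring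
  have hKper : ∀ z ∈ qAnn ‖p‖, 1 < ‖z‖ → K (p * z) = K z := by
    intro z hz hz1
    have hb : ‖z‖ * ‖p‖ < 1 := hz.2
    have hz1' : z ≠ 1 := by
      rintro rfl
      simp at hz1
    have hn : ‖p * z‖ = ‖p‖ * ‖z‖ := norm_mul _ _
    have hpz1 : p * z ≠ 1 := by
      intro h
      rw [h, norm_one] at hn
      linarith
    have hpz : p * z ∈ qAnn ‖p‖ := by
      refine ⟨?_, ?_⟩
      · rw [hn]
        nlinarith
      · rw [hn]
        nlinarith
    rw [hKE _ hpz hpz1, hKE z hz hz1', hEper z (hne z hz)]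
  have hconst := qLiou hp0 hp1 K hKd hKper
  intro z hz hz1
  have h1 := hconst z hz w hw
  rw [hKE z hz hz1, hKE w hw hwne1, hEw] at h1
  simp only [E, X] at h1
  linear_combination h1

lemma qMain_deriv {p w : ℂ} (hp0 : 0 < ‖p‖) (hp1 : ‖p‖ < 1) (hw : w ∈ qAnn ‖p‖) (hw1 : ‖w‖ < 1) :
    deriv (qPP p) w = qPochInf p p ^ 6 * qTh p (w * w) / qTh p w ^ 4 := by
  have hwne : w ≠ 0 := norm_pos_iff.mp (hp0.trans hw.1)
  have hwne1 : w ≠ 1 := by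
    rintro rfl
    simp at hw1
  have hTw : qTh p w ≠ 0 := by
    rw [qTh_eq p w hp1]
    exact mul_ne_zero (fun h => hwne1 (by linear_combination -h)) (qB_ne hp0 hp1 hw)
  set c := -w * qPochInf p p ^ 4 / qTh p w ^ 2 with hc
  let G : ℂ → ℂ := fun z => qTh p (z * w) * qB p (z / w) / qTh p z ^ 2
  have hGd : DifferentiableAt ℂ G w := by
    have h1 : DifferentiableAt ℂ (fun z => qTh p (z * w)) w :=
      DifferentiableAt.comp (f := fun z => z * w) w (qTh_diff hp1 (mul_ne_zero hwne hwne)) (by fun_prop)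
    have h2 : DifferentiableAt ℂ (fun z => qB p (z / w)) w :=
      DifferentiableAt.comp (f := fun z => z / w) w (qB_diff hp1 (div_ne_zero hwne hwne)) (by fun_prop)
    exact (h1.mul h2).div ((qTh_diff hp1 hwne).pow 2) (pow_ne_zero 2 hTw)
  have hE : qPP p =ᶠ[nhds w] fun z => qPP p w + c * ((1 - z / w) * G z) := by
    filter_upwards [(qAnn_open _).mem_nhds hw, isOpen_ne.mem_nhds hwne1] with z hz hz1
    have := qMain hp0 hp1 hw hw1 z hz hz1
    rw [qTh_eq p (z / w) hp1, ← hc] at this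
    simp only [G, qB]
    linear_combination this
  rw [hE.deriv_eq]
  have hl : HasDerivAt (fun z : ℂ => 1 - z / w) (-(1 / w)) w := by
    simpa using ((hasDerivAt_id w).div_const w).const_sub 1
  have h := ((hl.mul hGd.hasDerivAt).const_mul c).const_add (qPP p w)
  have h' : deriv (fun z => qPP p w + c * ((1 - z / w) * G z)) w = _ := h.deriv
  rw [h']
  simp only [G, qB]
  rw [div_self hwne, hc, mul_one, div_one]
  field_simp
  ring

/-- For 0 < |q| < 1, the bilateral series ∑_{n∈ℤ} (1 + q^{3n+1})·q^{3n+1}/(1 − q^{3n+1})³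
converges and equals q·(q³;q³)⁶_∞ / ((q;q³)³_∞ (q²;q³)³_∞). -/
theorem bilateral_sum_B3 (q : ℂ) (h0 : 0 < ‖q‖) (h1 : ‖q‖ < 1) :
    Summable (fun n : ℤ =>
      (1 + q ^ (3 * n + 1)) * q ^ (3 * n + 1) / (1 - q ^ (3 * n + 1)) ^ 3) ∧
    ∑' n : ℤ, (1 + q ^ (3 * n + 1)) * q ^ (3 * n + 1) / (1 - q ^ (3 * n + 1)) ^ 3 =
      q * qPochInf (q ^ 3) (q ^ 3) ^ 6 /
        (qPochInf q (q ^ 3) ^ 3 * qPochInf (q ^ 2) (q ^ 3) ^ 3) := by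
  have hq : q ≠ 0 := norm_pos_iff.mp h0
  have hp0 : 0 < ‖q ^ 3‖ := norm_pos_iff.mpr (pow_ne_zero 3 hq)
  have hp1 : ‖q ^ 3‖ < 1 := by
    rw [norm_pow]
    exact pow_lt_one₀ h0.le h1 (by norm_num)
  have hw : q ∈ qAnn ‖q ^ 3‖ := by
    refine ⟨?_, by nlinarith⟩
    rw [norm_pow]
    exact pow_lt_self_of_lt_one₀ h0 h1 (by norm_num)
  have hq1 : q ≠ 1 := by
    rintro rfl
    simp at h1
  have hs := (qPP_deriv hp0 hp1 hw hq1).mul_left q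
  have hfun : (fun n : ℤ => q * ((1 + q * (q ^ 3) ^ n) * (q ^ 3) ^ n / (1 - q * (q ^ 3) ^ n) ^ 3))
      = fun n : ℤ => (1 + q ^ (3 * n + 1)) * q ^ (3 * n + 1) / (1 - q ^ (3 * n + 1)) ^ 3 := by
    ext n
    have : q ^ (3 * n + 1) = q * (q ^ 3) ^ n := by
      rw [zpow_add_one₀ hq, zpow_mul, mul_comm]
      norm_cast
    rw [this]
    ring
  rw [hfun] at hs
  refine ⟨hs.summable, ?_⟩
  rw [hs.tsum_eq, qMain_deriv hp0 hp1 hw h1]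
  have e1 : q ^ 3 / (q * q) = q := by field_simp
  have e2 : q ^ 3 / q = q ^ 2 := by field_simp
  have e3 : q * q = q ^ 2 := by ring
  have n1 : qPochInf q (q ^ 3) ≠ 0 := qP_ne_zero hp1 h1
  have n2 : qPochInf (q ^ 2) (q ^ 3) ≠ 0 := qP_ne_zero hp1 (by
    rw [norm_pow]
    exact pow_lt_one₀ h0.le h1 (by norm_num))
  unfold qTh
  rw [e1, e2, e3]
  field_simp
end
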